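/- Let A satisfy (H1), let β_i ∈ (-2,0] for all i ∈ I with not all β_i equal to 0, and let u be any solution of the singular Liouville system on ℝ². Then every component u_i is a radial function, i.e. u_i(x) depends only on |x|. -/

import Mathlib

open Set MeasureTheory

/-- Hypothesis (H1): symmetric, nonnegative entries, irreducible, invertible. -/
def H1 {n : ℕ} (A : Matrix (Fin n) (Fin n) ℝ) : Prop :=
  A.IsSymm ∧ (∀ i j, 0 ≤ A i j) ∧
  (∀ S : Finset (Fin n), S.Nonempty → S ≠ Finset.univ → ∃ i ∈ S, ∃ j ∈ Sᶜ, A i j ≠ 0) ∧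
  IsUnit A.det

/-- The Euclidean norm on ℝ². -/
noncomputable def nrm (x : ℝ × ℝ) : ℝ := Real.sqrt (x.1 ^ 2 + x.2 ^ 2)

/-- The Laplacian on ℝ²: sum of the two second partial derivatives. -/
noncomputable def lap (u : ℝ × ℝ → ℝ) (x : ℝ × ℝ) : ℝ :=
  deriv (deriv (fun s => u (s, x.2))) x.1 + deriv (deriv (fun t => u (x.1, t))) x.2

/-- Solution (not necessarily radial) of the singular Liouville system on ℝ²
with the finite-energy condition. -/
def PDESolution {n : ℕ} (A : Matrix (Fin n) (Fin n) ℝ) (β : Fin n → ℝ)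
    (u : Fin n → ℝ × ℝ → ℝ) : Prop :=
  (∀ i, Continuous (u i)) ∧
  (∀ i, ∀ x : ℝ × ℝ, x ≠ 0 → ContDiffAt ℝ 2 (u i) x) ∧
  (∀ i, ∀ x : ℝ × ℝ, x ≠ 0 →
      lap (u i) x + ∑ j, A i j * nrm x ^ β j * Real.exp (u j x) = 0) ∧
  (∀ i, Integrable (fun x : ℝ × ℝ => nrm x ^ β i * Real.exp (u i x)))

section Proof

open Filter Topology

section

lemma curve_deriv2 {F : ℝ × ℝ → ℝ} {γ γ' : ℝ → ℝ × ℝ} {γ'' : ℝ × ℝ} {t : ℝ}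
    (hF : ContDiffAt ℝ 2 F (γ t)) (h1 : ∀ᶠ s in 𝓝 t, HasDerivAt γ (γ' s) s)
    (h2 : HasDerivAt γ' γ'' t) :
    (∀ᶠ s in 𝓝 t, HasDerivAt (fun s => F (γ s)) (fderiv ℝ F (γ s) (γ' s)) s) ∧
    HasDerivAt (fun s => fderiv ℝ F (γ s) (γ' s))
      (fderiv ℝ (fderiv ℝ F) (γ t) (γ' t) (γ' t) + fderiv ℝ F (γ t) γ'') t := by
  have hγ : HasDerivAt γ (γ' t) t := h1.self_of_nhds
  constructor
  · have h3 : ∀ᶠ y in 𝓝 (γ t), ContDiffAt ℝ 2 F y := hF.eventually (by simp)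
    filter_upwards [h1, hγ.continuousAt.eventually h3] with s hs hs'
    exact (hs'.differentiableAt (by norm_num)).hasFDerivAt.comp_hasDerivAt s hs
  · have h4 : ContDiffAt ℝ 1 (fderiv ℝ F) (γ t) := hF.fderiv_right (by norm_num)
    have h5 := (h4.differentiableAt (by norm_num)).hasFDerivAt.comp_hasDerivAt t hγ
    exact h5.clm_apply h2

lemma deriv2_of {f f' : ℝ → ℝ} {f'' t : ℝ} (h1 : ∀ᶠ s in 𝓝 t, HasDerivAt f (f' s) s)
    (h2 : HasDerivAt f' f'' t) : deriv (deriv f) t = f'' := by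
  have : deriv f =ᶠ[𝓝 t] f' := by filter_upwards [h1] with s hs using hs.deriv
  rw [this.deriv_eq, h2.deriv]

lemma lineh (b : ℝ) (s : ℝ) : HasDerivAt (fun s : ℝ => ((s, b) : ℝ × ℝ)) (1, 0) s :=
  (hasDerivAt_id s).prodMk (hasDerivAt_const s b)

lemma linev (a : ℝ) (s : ℝ) : HasDerivAt (fun s : ℝ => ((a, s) : ℝ × ℝ)) (0, 1) s :=
  (hasDerivAt_const s a).prodMk (hasDerivAt_id s)

lemma lap_eq {F : ℝ × ℝ → ℝ} {x : ℝ × ℝ} (hF : ContDiffAt ℝ 2 F x) :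
    lap F x = fderiv ℝ (fderiv ℝ F) x (1, 0) (1, 0) + fderiv ℝ (fderiv ℝ F) x (0, 1) (0, 1) := by
  obtain ⟨a, b⟩ := x
  have h1 := curve_deriv2 (γ := fun s => (s, b)) (γ' := fun _ => (1, 0)) (γ'' := 0) (t := a) hF
    (Eventually.of_forall (lineh b)) (hasDerivAt_const _ _)
  have h2 := curve_deriv2 (γ := fun s => (a, s)) (γ' := fun _ => (0, 1)) (γ'' := 0) (t := b) hF
    (Eventually.of_forall (linev a)) (hasDerivAt_const _ _)
  simp only [lap]
  rw [deriv2_of h1.1 h1.2, deriv2_of h2.1 h2.2]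
  simp

lemma lap_congr {F G : ℝ × ℝ → ℝ} {x : ℝ × ℝ} (h : F =ᶠ[𝓝 x] G) : lap F x = lap G x := by
  obtain ⟨a, b⟩ := x
  have h1 : (fun s => F (s, b)) =ᶠ[𝓝 a] fun s => G (s, b) :=
    (lineh b a).continuousAt.eventually h
  have h2 : (fun s => F (a, s)) =ᶠ[𝓝 b] fun s => G (a, s) :=
    (linev a b).continuousAt.eventually h
  simp only [lap]
  rw [h1.deriv.deriv_eq, h2.deriv.deriv_eq]

lemma lap_add {F G : ℝ × ℝ → ℝ} {x : ℝ × ℝ} (hF : ContDiffAt ℝ 2 F x) (hG : ContDiffAt ℝ 2 G x) :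
    lap (fun y => F y + G y) x = lap F x + lap G x := by
  have h1 : fderiv ℝ (fun y => F y + G y) =ᶠ[𝓝 x] fun y => fderiv ℝ F y + fderiv ℝ G y := by
    filter_upwards [hF.eventually (by simp), hG.eventually (by simp)] with y h1 h2
    exact fderiv_fun_add (h1.differentiableAt (by norm_num)) (h2.differentiableAt (by norm_num))
  have hF' : ContDiffAt ℝ 1 (fderiv ℝ F) x := hF.fderiv_right (by norm_num)
  have hG' : ContDiffAt ℝ 1 (fderiv ℝ G) x := hG.fderiv_right (by norm_num)
  rw [lap_eq hF, lap_eq hG, lap_eq (hF.add hG), h1.fderiv_eq, fderiv_fun_add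
    (hF'.differentiableAt (by norm_num)) (hG'.differentiableAt (by norm_num))]
  simp; ring

lemma lap_const_mul (c : ℝ) (F : ℝ × ℝ → ℝ) (x : ℝ × ℝ) :
    lap (fun y => c * F y) x = c * lap F x := by
  simp only [lap, deriv_const_mul_field', deriv_const_mul_field]
  ring

lemma lap_const (c : ℝ) (x : ℝ × ℝ) : lap (fun _ => c) x = 0 := by
  simp [lap]

lemma lap_sum {ι : Type*} (s : Finset ι) {F : ι → ℝ × ℝ → ℝ} {x : ℝ × ℝ}
    (hF : ∀ i ∈ s, ContDiffAt ℝ 2 (F i) x) :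
    lap (fun y => ∑ i ∈ s, F i y) x = ∑ i ∈ s, lap (F i) x := by
  classical
  induction s using Finset.induction_on with
  | empty => simp [lap_const]
  | insert i s hi ih =>
    simp only [Finset.sum_insert hi]
    rw [lap_add (hF i (by simp)) (ContDiffAt.sum fun j hj => hF j (by simp [hj])),
      ih fun j hj => hF j (by simp [hj])]

lemma differentiableAt_deriv_of {q : ℝ → ℝ} {t : ℝ} (hq : ContDiffAt ℝ 2 q t) :
    DifferentiableAt ℝ (deriv q) t := by
  have h4 : ContDiffAt ℝ 1 (fderiv ℝ q) t := hq.fderiv_right (by norm_num)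
  exact (h4.differentiableAt (by norm_num)).clm_apply (differentiableAt_const (1 : ℝ))

lemma deriv2_comp {φ q : ℝ → ℝ} {t : ℝ} (hq : ContDiffAt ℝ 2 q t) (hφ : ContDiffAt ℝ 2 φ (q t)) :
    deriv (deriv (fun s => φ (q s))) t
      = deriv (deriv φ) (q t) * (deriv q t) ^ 2 + deriv φ (q t) * deriv (deriv q) t := by
  have hq1 : ∀ᶠ s in 𝓝 t, HasDerivAt q (deriv q s) s := by
    filter_upwards [hq.eventually (by simp)] with s hs
    exact (hs.differentiableAt (by norm_num)).hasDerivAt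
  have hp1 : ∀ᶠ s in 𝓝 (q t), HasDerivAt φ (deriv φ s) s := by
    filter_upwards [hφ.eventually (by simp)] with s hs
    exact (hs.differentiableAt (by norm_num)).hasDerivAt
  have hq2 : HasDerivAt (deriv q) (deriv (deriv q) t) t :=
    (differentiableAt_deriv_of hq).hasDerivAt
  have hp2 : HasDerivAt (deriv φ) (deriv (deriv φ) (q t)) (q t) :=
    (differentiableAt_deriv_of hφ).hasDerivAt
  apply deriv2_of (f' := fun s => deriv φ (q s) * deriv q s)
  · filter_upwards [hq1, hq.continuousAt.eventually hp1] with s h1 h2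
    exact h2.comp s h1
  · refine ((hp2.comp t hq1.self_of_nhds).mul hq2).congr_deriv ?_
    simp; ring

lemma lap_comp {φ : ℝ → ℝ} {Q : ℝ × ℝ → ℝ} {x : ℝ × ℝ} (hQ : ContDiffAt ℝ 2 Q x)
    (hφ : ContDiffAt ℝ 2 φ (Q x)) :
    lap (fun y => φ (Q y)) x = deriv (deriv φ) (Q x) *
      ((deriv (fun s => Q (s, x.2)) x.1) ^ 2 + (deriv (fun s => Q (x.1, s)) x.2) ^ 2)
      + deriv φ (Q x) * lap Q x := by
  obtain ⟨a, b⟩ := x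
  have h1 : ContDiffAt ℝ 2 (fun s => Q (s, b)) a :=
    ContDiffAt.comp (f := fun s : ℝ => (s, b)) a hQ (by fun_prop)
  have h2 : ContDiffAt ℝ 2 (fun s => Q (a, s)) b :=
    ContDiffAt.comp (f := fun s : ℝ => (a, s)) b hQ (by fun_prop)
  simp only [lap]
  rw [deriv2_comp h1 hφ, deriv2_comp h2 hφ]
  ring

/-- rotation -/
def rot (a b : ℝ) (x : ℝ × ℝ) : ℝ × ℝ := (a * x.1 - b * x.2, b * x.1 + a * x.2)

lemma lap_rot {F : ℝ × ℝ → ℝ} {a b : ℝ} (hab : a ^ 2 + b ^ 2 = 1) {x : ℝ × ℝ}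
    (hF : ContDiffAt ℝ 2 F (rot a b x)) :
    lap (fun y => F (rot a b y)) x = lap F (rot a b x) := by
  obtain ⟨p, q⟩ := x
  have e1 : ∀ s, HasDerivAt (fun s => rot a b (s, q)) (a, b) s := fun s => by
    unfold rot
    refine HasDerivAt.prodMk ?_ ?_
    · simpa using ((hasDerivAt_id s).const_mul a).sub_const (b * q)
    · simpa using ((hasDerivAt_id s).const_mul b).add_const (a * q)
  have e2 : ∀ s, HasDerivAt (fun s => rot a b (p, s)) (-b, a) s := fun s => by
    unfold rot
    refine HasDerivAt.prodMk ?_ ?_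
    · simpa using ((hasDerivAt_id s).const_mul b).const_sub (a * p)
    · simpa using ((hasDerivAt_id s).const_mul a).const_add (b * p)
  have h1 := curve_deriv2 (γ := fun s => rot a b (s, q)) (γ' := fun _ => (a, b)) (γ'' := 0)
    (t := p) hF (Eventually.of_forall e1) (hasDerivAt_const _ _)
  have h2 := curve_deriv2 (γ := fun s => rot a b (p, s)) (γ' := fun _ => (-b, a)) (γ'' := 0)
    (t := q) hF (Eventually.of_forall e2) (hasDerivAt_const _ _)
  rw [lap_eq hF]
  simp only [lap]
  rw [deriv2_of h1.1 h1.2, deriv2_of h2.1 h2.2]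
  have i1 : ((a, b) : ℝ × ℝ) = a • (1, 0) + b • (0, 1) := by simp
  have i2 : ((-b, a) : ℝ × ℝ) = (-b) • (1, 0) + a • (0, 1) := by simp
  rw [i1, i2]
  simp only [map_add, map_smul, add_apply, smul_apply,
    smul_eq_mul, map_zero, add_zero]
  linear_combination ((fderiv ℝ (fderiv ℝ F) (rot a b (p, q)) (1, 0) (1, 0) +
    fderiv ℝ (fderiv ℝ F) (rot a b (p, q)) (0, 1) (0, 1))) * hab

lemma lap_refl (F : ℝ × ℝ → ℝ) (c : ℝ) (x : ℝ × ℝ) :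
    lap (fun y => F (c - y.1, y.2)) x = lap F (c - x.1, x.2) := by
  simp only [lap]
  congr 1
  have : deriv (fun s => F (c - s, x.2)) = fun s => -deriv (fun s => F (s, x.2)) (c - s) := by
    ext s
    exact deriv_comp_const_sub (f := fun s => F (s, x.2)) c s
  rw [this]
  simp only [deriv.fun_neg]
  rw [deriv_comp_const_sub (f := deriv fun s => F (s, x.2)) c]
  simp

lemma lap_shift (F : ℝ × ℝ → ℝ) (c x : ℝ × ℝ) :
    lap (fun y => F (c + y)) x = lap F (c + x) := by
  simp only [lap, Prod.fst_add, Prod.snd_add]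
  obtain ⟨c1, c2⟩ := c
  simp only [Prod.mk_add_mk]
  have h1 : deriv (fun s => F (c1 + s, c2 + x.2)) =
      fun s => deriv (fun s => F (s, c2 + x.2)) (c1 + s) := by
    ext s; exact deriv_comp_const_add (f := fun s => F (s, c2 + x.2)) c1 s
  have h2 : deriv (fun s => F (c1 + x.1, c2 + s)) =
      fun s => deriv (fun s => F (c1 + x.1, s)) (c2 + s) := by
    ext s; exact deriv_comp_const_add (f := fun s => F (c1 + x.1, s)) c2 s
  rw [h1, h2, deriv_comp_const_add (f := deriv _), deriv_comp_const_add (f := deriv _)]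

end

section

lemma nrm_eq_norm (x : ℝ × ℝ) : nrm x = ‖(⟨x.1, x.2⟩ : ℂ)‖ := by
  rw [Complex.norm_eq_sqrt_sq_add_sq, nrm]

lemma nrm_nonneg (x : ℝ × ℝ) : 0 ≤ nrm x := Real.sqrt_nonneg _

lemma nrm_sq (x : ℝ × ℝ) : nrm x ^ 2 = x.1 ^ 2 + x.2 ^ 2 := Real.sq_sqrt (by positivity)

lemma nrm_add_le (x y : ℝ × ℝ) : nrm (x + y) ≤ nrm x + nrm y := by
  simp only [nrm_eq_norm]
  exact norm_add_le (⟨x.1, x.2⟩ : ℂ) ⟨y.1, y.2⟩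

lemma nrm_neg (x : ℝ × ℝ) : nrm (-x) = nrm x := by simp [nrm]

lemma nrm_sub_comm (x y : ℝ × ℝ) : nrm (x - y) = nrm (y - x) := by
  rw [← nrm_neg, neg_sub]

lemma nrm_eq_zero {x : ℝ × ℝ} : nrm x = 0 ↔ x = 0 := by
  constructor
  · intro h
    have := nrm_sq x
    rw [h] at this
    have h1 : x.1 = 0 := by nlinarith [sq_nonneg x.1, sq_nonneg x.2]
    have h2 : x.2 = 0 := by nlinarith [sq_nonneg x.1, sq_nonneg x.2]
    exact Prod.ext h1 h2
  · rintro rfl; simp [nrm]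

lemma nrm_pos {x : ℝ × ℝ} (hx : x ≠ 0) : 0 < nrm x :=
  lt_of_le_of_ne (nrm_nonneg x) fun h => hx (nrm_eq_zero.1 h.symm)

lemma continuous_nrm : Continuous nrm := by unfold nrm; fun_prop

lemma norm_le_nrm (x : ℝ × ℝ) : ‖x‖ ≤ nrm x := by
  rw [Prod.norm_def]
  refine max_le ?_ ?_
  · rw [Real.norm_eq_abs]; exact Real.abs_le_sqrt (by nlinarith [sq_nonneg x.2])
  · rw [Real.norm_eq_abs]; exact Real.abs_le_sqrt (by nlinarith [sq_nonneg x.1])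

lemma nrm_polar {s : ℝ} (hs : 0 ≤ s) (θ : ℝ) : nrm (s * Real.cos θ, s * Real.sin θ) = s := by
  rw [nrm, show (s * Real.cos θ) ^ 2 + (s * Real.sin θ) ^ 2 = s ^ 2 * (Real.sin θ ^ 2 + Real.cos θ ^ 2)
    by ring, Real.sin_sq_add_cos_sq, mul_one, Real.sqrt_sq hs]

lemma isCompact_nrm_le (c : ℝ × ℝ) (r : ℝ) : IsCompact {x : ℝ × ℝ | nrm (x - c) ≤ r} := by
  refine Metric.isCompact_of_isClosed_isBounded ?_ ?_
  · exact isClosed_le (continuous_nrm.comp (continuous_id.sub continuous_const)) continuous_const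
  · refine (Metric.isBounded_closedBall (x := c) (r := r)).subset fun x hx => ?_
    rw [Metric.mem_closedBall, dist_eq_norm]
    exact (norm_le_nrm _).trans hx

lemma isCompact_nrm_le' (r : ℝ) : IsCompact {x : ℝ × ℝ | nrm x ≤ r} := by
  simpa using isCompact_nrm_le 0 r

/-- differentiation under the circle integral -/
lemma param_deriv {h h' : ℝ → ℝ → ℝ} {T : ℝ}
    (hc : ∀ t < T, ∀ θ, ContinuousAt (fun p : ℝ × ℝ => h p.1 p.2) (t, θ))
    (hc' : ∀ t < T, ∀ θ, ContinuousAt (fun p : ℝ × ℝ => h' p.1 p.2) (t, θ))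
    (hd : ∀ t < T, ∀ θ, HasDerivAt (fun t => h t θ) (h' t θ) t) {t : ℝ} (ht : t < T) :
    HasDerivAt (fun t => ∫ θ in (-Real.pi)..Real.pi, h t θ)
      (∫ θ in (-Real.pi)..Real.pi, h' t θ) t := by
  have cs : ∀ t < T, Continuous (h t) := fun t ht => continuous_iff_continuousAt.2 fun θ =>
    ContinuousAt.comp (f := fun θ : ℝ => (t, θ)) (hc t ht θ) (by fun_prop)
  have cs' : ∀ t < T, Continuous (h' t) := fun t ht => continuous_iff_continuousAt.2 fun θ =>
    ContinuousAt.comp (f := fun θ : ℝ => (t, θ)) (hc' t ht θ) (by fun_prop)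
  set δ := (T - t) / 2 with hδ
  have hδ0 : 0 < δ := by rw [hδ]; linarith
  have hK : IsCompact (Icc (t - δ) (t + δ) ×ˢ Icc (-Real.pi) Real.pi) :=
    isCompact_Icc.prod isCompact_Icc
  have hlt : ∀ s ∈ Icc (t - δ) (t + δ), s < T := fun s hs => by linarith [hs.2]
  obtain ⟨C, hC⟩ := hK.exists_bound_of_continuousOn (f := fun p : ℝ × ℝ => h' p.1 p.2)
    (fun p hp => (hc' p.1 (hlt _ hp.1) p.2).continuousWithinAt)
  refine (intervalIntegral.hasDerivAt_integral_of_dominated_loc_of_deriv_le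
    (s := Icc (t - δ) (t + δ)) (bound := fun _ => C)
    (Icc_mem_nhds (by linarith) (by linarith)) ?_ ((cs t ht).intervalIntegrable _ _)
    (cs' t ht).aestronglyMeasurable ?_ (by simp) ?_).2
  · filter_upwards [Iio_mem_nhds ht] with s hs using (cs s hs).aestronglyMeasurable
  · refine Eventually.of_forall fun θ hθ s hs => hC (s, θ) ⟨hs, ?_⟩
    rw [uIoc_of_le (by linarith [Real.pi_pos])] at hθ
    exact ⟨hθ.1.le, hθ.2⟩
  · exact Eventually.of_forall fun θ hθ s hs => hd s (hlt s hs) θ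

/-- a convex function bounded at `-∞` dominates its limit there -/
lemma ge_of_convex_bdd {M M1 M2 : ℝ → ℝ} {T L : ℝ} (h1 : ∀ t < T, HasDerivAt M (M1 t) t)
    (h2 : ∀ t < T, HasDerivAt M1 (M2 t) t) (h3 : ∀ t < T, 0 ≤ M2 t)
    (hL : Tendsto M atBot (𝓝 L)) {t : ℝ} (ht : t < T) : L ≤ M t := by
  have mono1 : MonotoneOn M1 (Iio T) := by
    refine monotoneOn_of_deriv_nonneg (convex_Iio T)
      (fun s hs => (h2 s hs).continuousAt.continuousWithinAt) ?_ ?_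
    · rw [interior_Iio]; exact fun s hs => (h2 s hs).differentiableAt.differentiableWithinAt
    · rw [interior_Iio]; exact fun s hs => by rw [(h2 s hs).deriv]; exact h3 s hs
  have pos : ∀ t < T, 0 ≤ M1 t := by
    intro t0 ht0
    by_contra hneg
    push Not at hneg
    have lin : ∀ s ≤ t0, M t0 - M1 t0 * (t0 - s) ≤ M s := by
      intro s hs
      have anti : AntitoneOn (fun s => M s - M1 t0 * s) (Iic t0) := by
        refine antitoneOn_of_deriv_nonpos (convex_Iic t0) ?_ ?_ ?_
        · intro s hs
          have := h1 s (lt_of_le_of_lt hs ht0)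
          exact (this.continuousAt.sub (by fun_prop)).continuousWithinAt
        · rw [interior_Iic]
          intro s hs
          have := h1 s (lt_trans hs ht0)
          exact (this.differentiableAt.sub (by fun_prop)).differentiableWithinAt
        · rw [interior_Iic]
          intro s hs
          have := (h1 s (lt_trans hs ht0)).sub ((hasDerivAt_id s).const_mul (M1 t0))
          have e := this.deriv
          simp only [mul_one] at e
          have e2 : deriv (fun s => M s - M1 t0 * s) s = M1 s - M1 t0 := e
          rw [e2]
          have := mono1 (lt_trans hs ht0) ht0 (le_of_lt hs)
          linarith
      have := anti hs (mem_Iic.2 le_rfl) hs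
      simp only at this
      linarith
    have hev : ∀ᶠ s in atBot, M s < L + 1 := hL.eventually_lt_const (by linarith)
    have hev2 : ∀ᶠ s in atBot, s ≤ t0 - (L + 1 - M t0) / (-M1 t0) := eventually_le_atBot _
    obtain ⟨s, ⟨ha, hb⟩, hcc⟩ := ((hev.and hev2).and (eventually_le_atBot t0)).exists
    have := lin s hcc
    have h5 : (L + 1 - M t0) / (-M1 t0) ≤ t0 - s := by linarith
    rw [div_le_iff₀ (by linarith)] at h5
    nlinarith
  have mono : MonotoneOn M (Iio T) := by
    refine monotoneOn_of_deriv_nonneg (convex_Iio T)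
      (fun s hs => (h1 s hs).continuousAt.continuousWithinAt) ?_ ?_
    · rw [interior_Iio]; exact fun s hs => (h1 s hs).differentiableAt.differentiableWithinAt
    · rw [interior_Iio]; exact fun s hs => by rw [(h1 s hs).deriv]; exact pos s hs
  refine le_of_tendsto hL ?_
  filter_upwards [eventually_le_atBot t] with s hs
  exact mono (lt_of_le_of_lt hs ht) ht hs

/-- log-polar coordinates -/
noncomputable def lpol (t θ : ℝ) : ℝ × ℝ := (Real.exp t * Real.cos θ, Real.exp t * Real.sin θ)
noncomputable def lpol' (t θ : ℝ) : ℝ × ℝ := (Real.exp t * -Real.sin θ, Real.exp t * Real.cos θ)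

lemma lp_t (t θ : ℝ) : HasDerivAt (fun t => lpol t θ) (lpol t θ) t :=
  ((Real.hasDerivAt_exp t).mul_const _).prodMk ((Real.hasDerivAt_exp t).mul_const _)

lemma lp_θ (t θ : ℝ) : HasDerivAt (fun θ => lpol t θ) (lpol' t θ) θ :=
  ((Real.hasDerivAt_cos θ).const_mul _).prodMk ((Real.hasDerivAt_sin θ).const_mul _)

lemma lpol'_θ (t θ : ℝ) : HasDerivAt (fun θ => lpol' t θ) (-lpol t θ) θ := by
  have : -lpol t θ = (Real.exp t * -Real.cos θ, Real.exp t * -Real.sin θ) := by simp [lpol]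
  rw [this]
  exact ((Real.hasDerivAt_sin θ).neg.const_mul _).prodMk ((Real.hasDerivAt_cos θ).const_mul _)

lemma nrm_lp (t θ : ℝ) : nrm (lpol t θ) = Real.exp t := nrm_polar (Real.exp_pos t).le θ

lemma circle_mean {F : ℝ × ℝ → ℝ} {ρ : ℝ} (hρ : 0 < ρ) (hc : ContinuousAt F 0)
    (hC : ∀ x, x ≠ 0 → nrm x < ρ → ContDiffAt ℝ 2 F x)
    (hl : ∀ x, x ≠ 0 → nrm x < ρ → 0 ≤ lap F x) {s : ℝ} (hs : 0 < s) (hsρ : s < ρ) :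
    2 * Real.pi * F 0 ≤ ∫ θ in (-Real.pi)..Real.pi, F (s * Real.cos θ, s * Real.sin θ) := by
  have key : ∀ t < Real.log ρ, ∀ θ, lpol t θ ≠ 0 ∧ nrm (lpol t θ) < ρ := by
    intro t ht θ
    have := nrm_lp t θ
    refine ⟨fun h => ?_, ?_⟩
    · rw [nrm_eq_zero.2 h] at this; exact (Real.exp_pos t).ne this
    · rw [this]; exact (Real.lt_log_iff_exp_lt hρ).1 ht
  have hC2 : ∀ t < Real.log ρ, ∀ θ, ContDiffAt ℝ 2 F (lpol t θ) := fun t ht θ =>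
    hC _ (key t ht θ).1 (key t ht θ).2
  have clp : Continuous fun p : ℝ × ℝ => lpol p.1 p.2 := by unfold lpol; fun_prop
  have clp' : ∀ t, Continuous fun θ : ℝ => lpol' t θ := by intro t; unfold lpol'; fun_prop
  have clpt : ∀ t, Continuous fun θ : ℝ => lpol t θ := by intro t; unfold lpol; fun_prop
  have c1 : ∀ t < Real.log ρ, ∀ θ, ContinuousAt (fderiv ℝ F) (lpol t θ) := fun t ht θ =>
    ((hC2 t ht θ).fderiv_right (m := 1) (by norm_num)).continuousAt
  have c2 : ∀ t < Real.log ρ, ∀ θ, ContinuousAt (fderiv ℝ (fderiv ℝ F)) (lpol t θ) := fun t ht θ =>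
    (((hC2 t ht θ).fderiv_right (m := 1) (by norm_num)).fderiv_right (m := 0)
      (by norm_num)).continuousAt
  set h1 : ℝ → ℝ → ℝ := fun t θ => fderiv ℝ F (lpol t θ) (lpol t θ) with hh1
  set h2 : ℝ → ℝ → ℝ := fun t θ => fderiv ℝ (fderiv ℝ F) (lpol t θ) (lpol t θ) (lpol t θ) +
    fderiv ℝ F (lpol t θ) (lpol t θ) with hh2
  have ch0 : ∀ t < Real.log ρ, ∀ θ, ContinuousAt (fun p : ℝ × ℝ => F (lpol p.1 p.2)) (t, θ) :=
    fun t ht θ => ContinuousAt.comp (f := fun p : ℝ × ℝ => lpol p.1 p.2)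
      (hC2 t ht θ).continuousAt clp.continuousAt
  have d1 : ∀ t < Real.log ρ, ∀ θ, ContinuousAt (fun p : ℝ × ℝ => fderiv ℝ F (lpol p.1 p.2)) (t, θ) :=
    fun t ht θ => ContinuousAt.comp (f := fun p : ℝ × ℝ => lpol p.1 p.2)
      (c1 t ht θ) clp.continuousAt
  have d2 : ∀ t < Real.log ρ, ∀ θ,
      ContinuousAt (fun p : ℝ × ℝ => fderiv ℝ (fderiv ℝ F) (lpol p.1 p.2)) (t, θ) :=
    fun t ht θ => ContinuousAt.comp (f := fun p : ℝ × ℝ => lpol p.1 p.2)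
      (c2 t ht θ) clp.continuousAt
  have ch1 : ∀ t < Real.log ρ, ∀ θ, ContinuousAt (fun p : ℝ × ℝ => h1 p.1 p.2) (t, θ) :=
    fun t ht θ => (d1 t ht θ).clm_apply clp.continuousAt
  have ch2 : ∀ t < Real.log ρ, ∀ θ, ContinuousAt (fun p : ℝ × ℝ => h2 p.1 p.2) (t, θ) :=
    fun t ht θ => (((d2 t ht θ).clm_apply clp.continuousAt).clm_apply clp.continuousAt).add
      ((d1 t ht θ).clm_apply clp.continuousAt)
  have cur : ∀ t < Real.log ρ, ∀ θ, _ := fun t ht θ => curve_deriv2 (γ := fun t => lpol t θ)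
    (γ' := fun t => lpol t θ) (hC2 t ht θ) (Eventually.of_forall fun t => lp_t t θ) (lp_t t θ)
  have D1 := fun t (ht : t < Real.log ρ) => param_deriv ch0 ch1
    (fun t ht θ => (cur t ht θ).1.self_of_nhds) ht
  have D2 := fun t (ht : t < Real.log ρ) => param_deriv ch1 ch2 (fun t ht θ => (cur t ht θ).2) ht
  have slice : ∀ {h : ℝ → ℝ → ℝ} {t : ℝ},
      (∀ θ, ContinuousAt (fun p : ℝ × ℝ => h p.1 p.2) (t, θ)) → Continuous (h t) := by
    intro h t hh
    exact continuous_iff_continuousAt.2 fun θ =>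
      ContinuousAt.comp (f := fun θ : ℝ => (t, θ)) (hh θ) (by fun_prop)
  have D3 : ∀ t < Real.log ρ, 0 ≤ ∫ θ in (-Real.pi)..Real.pi, h2 t θ := by
    intro t ht
    set k2 : ℝ → ℝ := fun θ => fderiv ℝ (fderiv ℝ F) (lpol t θ) (lpol' t θ) (lpol' t θ) +
      fderiv ℝ F (lpol t θ) (-lpol t θ) with hk2
    have cd1 : Continuous fun θ => fderiv ℝ F (lpol t θ) := continuous_iff_continuousAt.2 fun θ =>
      ContinuousAt.comp (f := fun θ => lpol t θ) (c1 t ht θ) (clpt t).continuousAt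
    have cd2 : Continuous fun θ => fderiv ℝ (fderiv ℝ F) (lpol t θ) :=
      continuous_iff_continuousAt.2 fun θ =>
      ContinuousAt.comp (f := fun θ => lpol t θ) (c2 t ht θ) (clpt t).continuousAt
    have ck2 : Continuous k2 := ((cd2.clm_apply (clp' t)).clm_apply (clp' t)).add
      (cd1.clm_apply (clpt t).neg)
    have I2 : ∫ θ in (-Real.pi)..Real.pi, k2 θ = 0 := by
      rw [intervalIntegral.integral_eq_sub_of_hasDerivAt
        (f := fun θ => fderiv ℝ F (lpol t θ) (lpol' t θ)) _ (ck2.intervalIntegrable _ _)]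
      · simp [lpol, lpol']
      · intro θ _
        exact (curve_deriv2 (γ := fun θ => lpol t θ) (γ' := fun θ => lpol' t θ) (hC2 t ht θ)
          (Eventually.of_forall fun θ => lp_θ t θ) (lpol'_θ t θ)).2
    have ci2 : Continuous (h2 t) := slice (fun θ => ch2 t ht θ)
    have : ∫ θ in (-Real.pi)..Real.pi, h2 t θ = ∫ θ in (-Real.pi)..Real.pi, (h2 t θ + k2 θ) := by
      rw [intervalIntegral.integral_add (ci2.intervalIntegrable _ _) (ck2.intervalIntegrable _ _),
        I2, add_zero]
    rw [this]
    refine intervalIntegral.integral_nonneg (by linarith [Real.pi_pos]) fun θ _ => ?_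
    have e : h2 t θ + k2 θ = Real.exp t ^ 2 * lap F (lpol t θ) := by
      rw [lap_eq (hC2 t ht θ)]
      simp only [hh2, hk2]
      have i1 : lpol t θ = (Real.exp t * Real.cos θ) • (1, 0) + (Real.exp t * Real.sin θ) • (0, 1) := by
        simp [lpol]
      have i2 : lpol' t θ = (Real.exp t * -Real.sin θ) • (1, 0) +
        (Real.exp t * Real.cos θ) • (0, 1) := by simp [lpol']
      rw [map_neg, i2]
      generalize fderiv ℝ F (lpol t θ) (lpol t θ) = Z
      generalize fderiv ℝ (fderiv ℝ F) (lpol t θ) = B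
      rw [i1]
      simp only [map_add, map_smul, add_apply, smul_apply, smul_eq_mul]
      linear_combination (Real.exp t ^ 2 * (B (1, 0) (1, 0) + B (0, 1) (0, 1))) *
        Real.sin_sq_add_cos_sq θ
    rw [e]
    exact mul_nonneg (by positivity) (hl _ (key t ht θ).1 (key t ht θ).2)
  have lim : Tendsto (fun t => ∫ θ in (-Real.pi)..Real.pi, F (lpol t θ)) atBot
      (𝓝 (∫ _ in (-Real.pi)..Real.pi, F 0)) := by
    rw [Metric.tendsto_nhds]
    intro ε hε
    obtain ⟨δ, hδ, hδ'⟩ := Metric.continuousAt_iff.1 hc (ε / (4 * Real.pi))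
      (by have := Real.pi_pos; positivity)
    filter_upwards [eventually_lt_atBot (Real.log ρ), eventually_lt_atBot (Real.log δ)] with t h1 h2
    have cF : Continuous fun θ => F (lpol t θ) := slice (h := fun t θ => F (lpol t θ)) (fun θ => ch0 t h1 θ)
    rw [dist_eq_norm, ← intervalIntegral.integral_sub (cF.intervalIntegrable _ _) (by simp)]
    have := intervalIntegral.norm_integral_le_of_norm_le_const
      (f := fun θ => F (lpol t θ) - F 0) (a := -Real.pi) (b := Real.pi) (C := ε / (4 * Real.pi)) ?_
    · refine this.trans_lt ?_
      have hp := Real.pi_pos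
      rw [sub_neg_eq_add, abs_of_pos (by linarith)]
      have : ε / (4 * Real.pi) * (Real.pi + Real.pi) = ε / 2 := by field_simp; ring
      linarith
    · intro θ _
      have := @hδ' (lpol t θ) ?_
      · rw [dist_eq_norm] at this; exact this.le
      · rw [dist_eq_norm, sub_zero]
        refine (norm_le_nrm _).trans_lt ?_
        rw [nrm_lp]; exact (Real.lt_log_iff_exp_lt hδ).1 h2
  have fin := ge_of_convex_bdd D1 D2 D3 lim (t := Real.log s) (Real.log_lt_log hs hsρ)
  have e0 : ∫ _ in (-Real.pi)..Real.pi, F 0 = 2 * Real.pi * F 0 := by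
    rw [intervalIntegral.integral_const, smul_eq_mul]; ring
  rw [e0] at fin
  simpa [lpol, Real.exp_log hs] using fin

end

section

lemma area_mean0 {F : ℝ × ℝ → ℝ} {ρ : ℝ} (hc : ∀ x, nrm x < ρ → ContinuousAt F x)
    (hC : ∀ x, x ≠ 0 → nrm x < ρ → ContDiffAt ℝ 2 F x)
    (hl : ∀ x, x ≠ 0 → nrm x < ρ → 0 ≤ lap F x) {r : ℝ} (hr : 0 < r) (hrρ : r < ρ) :
    Real.pi * r ^ 2 * F 0 ≤ ∫ x in {x | nrm x < r}, F x := by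
  have hρ : 0 < ρ := hr.trans hrρ
  have hms : MeasurableSet {x : ℝ × ℝ | nrm x < r} :=
    (isOpen_lt continuous_nrm continuous_const).measurableSet
  set f : ℝ × ℝ → ℝ := fun p => p.1 * F (p.1 * Real.cos p.2, p.1 * Real.sin p.2) with hf
  have e1 : ∫ x in {x | nrm x < r}, F x = ∫ p in Ioo 0 r ×ˢ Ioo (-Real.pi) Real.pi, f p := by
    rw [← integral_indicator hms, ← integral_comp_polarCoord_symm, polarCoord_target,
      ← integral_indicator (measurableSet_Ioi.prod measurableSet_Ioo),
      ← integral_indicator (measurableSet_Ioo.prod measurableSet_Ioo)]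
    congr 1
    ext p
    by_cases h1 : p ∈ Ioo (0 : ℝ) r ×ˢ Ioo (-Real.pi) Real.pi
    · have h2 : p ∈ Ioi (0 : ℝ) ×ˢ Ioo (-Real.pi) Real.pi := ⟨h1.1.1, h1.2⟩
      rw [indicator_of_mem h1, indicator_of_mem h2, indicator_of_mem]
      · simp [hf, polarCoord]
      · simp only [polarCoord_symm_apply, mem_ofPred_eq]
        rw [nrm_polar h1.1.1.le]; exact h1.1.2
    · rw [indicator_of_notMem h1]
      by_cases h2 : p ∈ Ioi (0 : ℝ) ×ˢ Ioo (-Real.pi) Real.pi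
      · rw [indicator_of_mem h2, indicator_of_notMem, smul_zero]
        simp only [polarCoord_symm_apply, mem_ofPred_eq]
        rw [nrm_polar (le_of_lt h2.1)]
        intro h3
        exact h1 ⟨⟨h2.1, h3⟩, h2.2⟩
      · rw [indicator_of_notMem h2]
  have hIntg : IntegrableOn f (Ioo 0 r ×ˢ Ioo (-Real.pi) Real.pi) (volume.prod volume) := by
    have hK : IsCompact (Icc (0 : ℝ) r ×ˢ Icc (-Real.pi) Real.pi) :=
      isCompact_Icc.prod isCompact_Icc
    refine IntegrableOn.mono_set (ContinuousOn.integrableOn_compact hK ?_)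
      (prod_mono Ioo_subset_Icc_self Ioo_subset_Icc_self)
    intro p hp
    refine ContinuousAt.continuousWithinAt ?_
    refine continuousAt_fst.mul ?_
    refine ContinuousAt.comp (f := fun p : ℝ × ℝ => (p.1 * Real.cos p.2, p.1 * Real.sin p.2))
      (hc _ ?_) (by fun_prop)
    rw [nrm_polar hp.1.1]; exact hp.1.2.trans_lt hrρ
  have e2 : ∫ p in Ioo 0 r ×ˢ Ioo (-Real.pi) Real.pi, f p =
      ∫ s in Ioo 0 r, ∫ θ in Ioo (-Real.pi) Real.pi, f (s, θ) :=
    setIntegral_prod f hIntg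
  have hIntg2 : IntegrableOn (fun s => ∫ θ in Ioo (-Real.pi) Real.pi, f (s, θ)) (Ioo 0 r) := by
    have : Integrable f ((volume.restrict (Ioo 0 r)).prod
        (volume.restrict (Ioo (-Real.pi) Real.pi))) := by
      rw [Measure.prod_restrict]; exact hIntg
    exact this.integral_prod_left
  have e3 : ∫ s in Ioo 0 r, s * (2 * Real.pi * F 0) = Real.pi * r ^ 2 * F 0 := by
    rw [← integral_Ioc_eq_integral_Ioo, ← intervalIntegral.integral_of_le hr.le,
      intervalIntegral.integral_mul_const, integral_id]
    ring
  rw [e1, e2, ← e3]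
  refine setIntegral_mono_on ?_ hIntg2 measurableSet_Ioo ?_
  · exact (Continuous.integrableOn_Icc (by fun_prop)).mono_set Ioo_subset_Icc_self
  · intro s hs
    have := circle_mean hρ (hc 0 (by simpa [nrm] using hρ)) hC hl hs.1 (hs.2.trans hrρ)
    rw [intervalIntegral.integral_of_le (by linarith [Real.pi_pos]),
      integral_Ioc_eq_integral_Ioo] at this
    simp only [hf, integral_const_mul]
    exact mul_le_mul_of_nonneg_left this hs.1.le

lemma nrm_zero : nrm 0 = 0 := nrm_eq_zero.2 rfl

lemma area_mean {F : ℝ × ℝ → ℝ} {ρ : ℝ} {c : ℝ × ℝ} (hc : ∀ x, nrm (x - c) < ρ → ContinuousAt F x)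
    (hC : ∀ x, x ≠ c → nrm (x - c) < ρ → ContDiffAt ℝ 2 F x)
    (hl : ∀ x, x ≠ c → nrm (x - c) < ρ → 0 ≤ lap F x) {r : ℝ} (hr : 0 < r) (hrρ : r < ρ) :
    Real.pi * r ^ 2 * F c ≤ ∫ x in {x | nrm (x - c) < r}, F x := by
  have h := area_mean0 (F := fun y => F (c + y)) (ρ := ρ) ?_ ?_ ?_ hr hrρ
  · simp only [add_zero] at h
    have hms : MeasurableSet {x : ℝ × ℝ | nrm x < r} :=
      (isOpen_lt continuous_nrm continuous_const).measurableSet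
    have hms' : MeasurableSet {x : ℝ × ℝ | nrm (x - c) < r} :=
      (isOpen_lt (continuous_nrm.comp (by fun_prop)) continuous_const).measurableSet
    rw [← integral_indicator hms] at h
    rw [← integral_indicator hms', ← integral_add_left_eq_self _ c]
    convert h using 3 with x
    simp [indicator]
  · intro x hx
    exact ContinuousAt.comp (f := fun y => c + y) (hc _ (by simpa using hx)) (by fun_prop)
  · intro x hx hx'
    exact ContDiffAt.comp (f := fun y => c + y) x (hC _ (by simpa using hx) (by simpa using hx'))
      (by fun_prop)
  · intro x hx hx'
    rw [lap_shift]
    exact hl _ (by simpa using hx) (by simpa using hx')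

lemma nrm_nhds (c : ℝ × ℝ) {p : ℝ × ℝ → Prop} (h : ∀ᶠ x in 𝓝 c, p x) :
    ∃ ρ > 0, ∀ x, nrm (x - c) < ρ → p x := by
  obtain ⟨ρ, hρ, h⟩ := Metric.eventually_nhds_iff.1 h
  refine ⟨ρ, hρ, fun x hx => h ?_⟩
  rw [dist_eq_norm]; exact (norm_le_nrm _).trans_lt hx

lemma nrm_ball_nhds (c : ℝ × ℝ) {ρ : ℝ} (h : 0 < ρ) : ∀ᶠ x in 𝓝 c, nrm (x - c) < ρ := by
  have : ContinuousAt (fun x : ℝ × ℝ => nrm (x - c)) c :=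
    (continuous_nrm.comp (by fun_prop : Continuous fun x : ℝ × ℝ => x - c)).continuousAt
  refine this.eventually_lt_const ?_
  simpa [nrm_zero] using h

/-- strong minimum principle with a possibly singular centre -/
lemma smp {φ : ℝ × ℝ → ℝ} {c : ℝ × ℝ} (hc : ∀ᶠ x in 𝓝 c, ContinuousAt φ x)
    (hC : ∀ᶠ x in 𝓝 c, x ≠ c → ContDiffAt ℝ 2 φ x)
    (hl : ∀ᶠ x in 𝓝 c, x ≠ c → lap φ x ≤ 0) (hp : ∀ᶠ x in 𝓝 c, 0 ≤ φ x) (h0 : φ c = 0) :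
    ∀ᶠ x in 𝓝 c, φ x = 0 := by
  obtain ⟨ρ, hρ, H⟩ := nrm_nhds c (hc.and (hC.and (hl.and hp)))
  have h := area_mean (F := fun y => (-1) * φ y) (ρ := ρ) (c := c) (r := ρ / 2)
    (fun x hx => continuousAt_const.mul (H x hx).1)
    (fun x hx hx' => contDiffAt_const.mul ((H x hx').2.1 hx))
    (fun x hx hx' => by rw [lap_const_mul]; linarith [(H x hx').2.2.1 hx]) (by linarith) (by linarith)
  rw [integral_const_mul, h0] at h
  have hms' : MeasurableSet {x : ℝ × ℝ | nrm (x - c) < ρ / 2} :=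
    (isOpen_lt (continuous_nrm.comp (by fun_prop)) continuous_const).measurableSet
  have hIntg : IntegrableOn φ {x | nrm (x - c) < ρ / 2} := by
    refine IntegrableOn.mono_set (ContinuousOn.integrableOn_compact (isCompact_nrm_le c (ρ / 2)) ?_)
      (fun x hx => by simp only [mem_ofPred_eq] at hx ⊢; exact hx.le)
    intro x hx
    exact (H x (by rw [mem_ofPred_eq] at hx; linarith)).1.continuousWithinAt
  have hnn : 0 ≤ᵐ[volume.restrict {x | nrm (x - c) < ρ / 2}] φ := by
    filter_upwards [ae_restrict_mem hms'] with x hx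
    exact (H x (by linarith)).2.2.2
  have hz : ∫ x in {x | nrm (x - c) < ρ / 2}, φ x = 0 :=
    le_antisymm (by linarith) (integral_nonneg_of_ae hnn)
  rw [integral_eq_zero_iff_of_nonneg_ae hnn hIntg] at hz
  have hopen : IsOpen {x : ℝ × ℝ | nrm (x - c) < ρ / 2} :=
    isOpen_lt (continuous_nrm.comp (by fun_prop)) continuous_const
  have := Measure.eqOn_open_of_ae_eq hz hopen
    (fun x hx => (H x (by rw [mem_ofPred_eq] at hx; linarith)).1.continuousWithinAt)
    (continuousOn_const (c := (0 : ℝ)))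
  filter_upwards [nrm_ball_nhds c (half_pos hρ)] with x hx
  exact this hx

end

section

lemma contDiff_N (c : ℝ × ℝ) :
    ContDiff ℝ 2 (fun y : ℝ × ℝ => (y.1 - c.1) ^ 2 + (y.2 - c.2) ^ 2) := by fun_prop

lemma hasDerivAt_sq_sub (a s : ℝ) : HasDerivAt (fun s : ℝ => (s - a) ^ 2) (2 * (s - a)) s := by
  have := ((hasDerivAt_id s).sub_const a).fun_pow 2
  simpa using this

lemma lap_N (c x : ℝ × ℝ) :
    lap (fun y : ℝ × ℝ => (y.1 - c.1) ^ 2 + (y.2 - c.2) ^ 2) x = 4 := by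
  simp only [lap]
  rw [deriv2_of (f'' := 2) (Eventually.of_forall fun s => (hasDerivAt_sq_sub c.1 s).add_const _),
    deriv2_of (f'' := 2) (Eventually.of_forall fun s => (hasDerivAt_sq_sub c.2 s).const_add _)]
  · norm_num
  · simpa using ((hasDerivAt_id x.2).sub_const c.2).const_mul 2
  · simpa using ((hasDerivAt_id x.1).sub_const c.1).const_mul 2

/-- Laplacian of a radial function -/
lemma lap_radial {φ : ℝ → ℝ} {x : ℝ × ℝ} (hφ : ContDiffAt ℝ 2 φ (x.1 ^ 2 + x.2 ^ 2)) :
    lap (fun y => φ (y.1 ^ 2 + y.2 ^ 2)) x =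
      deriv (deriv φ) (x.1 ^ 2 + x.2 ^ 2) * (4 * (x.1 ^ 2 + x.2 ^ 2))
      + deriv φ (x.1 ^ 2 + x.2 ^ 2) * 4 := by
  have hN := (contDiff_N 0).contDiffAt (x := x)
  have hL := lap_N 0 x
  simp only [Prod.fst_zero, Prod.snd_zero, sub_zero] at hN hL
  rw [lap_comp (Q := fun y => y.1 ^ 2 + y.2 ^ 2) hN hφ, hL]
  have h1 : deriv (fun s => s ^ 2 + x.2 ^ 2) x.1 = 2 * x.1 := by
    have := ((hasDerivAt_sq_sub 0 x.1).add_const (x.2 ^ 2)).deriv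
    simpa using this
  have h2 : deriv (fun s => x.1 ^ 2 + s ^ 2) x.2 = 2 * x.2 := by
    have := ((hasDerivAt_sq_sub 0 x.2).const_add (x.1 ^ 2)).deriv
    simpa using this
  simp only [h1, h2]
  ring

lemma sq_pos_of_ne {x : ℝ × ℝ} (hx : x ≠ 0) : 0 < x.1 ^ 2 + x.2 ^ 2 := by
  rw [← nrm_sq]; exact pow_pos (nrm_pos hx) 2

lemma lap_log {x : ℝ × ℝ} (hx : x ≠ 0) : lap (fun y => Real.log (y.1 ^ 2 + y.2 ^ 2)) x = 0 := by
  have hp := sq_pos_of_ne hx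
  rw [lap_radial (Real.contDiffAt_log.2 hp.ne'), Real.deriv_log', deriv_inv]
  field_simp
  ring

lemma contDiffAt_logN {x : ℝ × ℝ} (hx : x ≠ 0) :
    ContDiffAt ℝ 2 (fun y : ℝ × ℝ => Real.log (y.1 ^ 2 + y.2 ^ 2)) x :=
  ContDiffAt.log (by fun_prop) (sq_pos_of_ne hx).ne'

lemma lap_exp {v : ℝ × ℝ → ℝ} {x : ℝ × ℝ} (hv : ContDiffAt ℝ 2 v x) :
    Real.exp (v x) * lap v x ≤ lap (fun y => Real.exp (v y)) x := by
  rw [lap_comp hv Real.contDiff_exp.contDiffAt]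
  simp only [Real.deriv_exp]
  have : 0 ≤ Real.exp (v x) * ((deriv (fun s => v (s, x.2)) x.1) ^ 2 +
    (deriv (fun s => v (x.1, s)) x.2) ^ 2) := by positivity
  linarith

lemma rpow_nrm {x : ℝ × ℝ} (hx : x ≠ 0) (b : ℝ) :
    nrm x ^ b = Real.exp (b / 2 * Real.log (x.1 ^ 2 + x.2 ^ 2)) := by
  rw [Real.rpow_def_of_pos (nrm_pos hx), ← nrm_sq, Real.log_pow]
  congr 1
  push_cast
  ring

lemma eq_near {x : ℝ × ℝ} (hx : x ≠ 0) (b : ℝ) (v : ℝ × ℝ → ℝ) :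
    (fun y => nrm y ^ b * Real.exp (v y)) =ᶠ[𝓝 x]
      fun y => Real.exp (v y + b / 2 * Real.log (y.1 ^ 2 + y.2 ^ 2)) := by
  filter_upwards [isOpen_ne.mem_nhds hx] with y hy
  rw [rpow_nrm hy, ← Real.exp_add, add_comm]

lemma contDiffAt_G {x : ℝ × ℝ} (hx : x ≠ 0) (b : ℝ) {v : ℝ × ℝ → ℝ} (hv : ContDiffAt ℝ 2 v x) :
    ContDiffAt ℝ 2 (fun y => nrm y ^ b * Real.exp (v y)) x := by
  refine ContDiffAt.congr_of_eventuallyEq ?_ (eq_near hx b v)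
  exact (hv.add (contDiffAt_const.mul (contDiffAt_logN hx))).exp

lemma lap_G {x : ℝ × ℝ} (hx : x ≠ 0) (b : ℝ) {v : ℝ × ℝ → ℝ} (hv : ContDiffAt ℝ 2 v x) :
    nrm x ^ b * Real.exp (v x) * lap v x ≤ lap (fun y => nrm y ^ b * Real.exp (v y)) x := by
  have hlog : ContDiffAt ℝ 2 (fun y : ℝ × ℝ => b / 2 * Real.log (y.1 ^ 2 + y.2 ^ 2)) x :=
    contDiffAt_const.mul (contDiffAt_logN hx)
  rw [lap_congr (eq_near hx b v)]
  have := lap_exp (hv.add hlog)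
  have e : lap (fun y : ℝ × ℝ => v y + b / 2 * Real.log (y.1 ^ 2 + y.2 ^ 2)) x = lap v x := by
    have := lap_add hv hlog
    rw [lap_const_mul, lap_log hx] at this
    simpa using this
  rw [e] at this
  have e2 := (eq_near hx b v).self_of_nhds
  simp only at e2
  rw [e2]
  exact this

lemma ms_ball (c : ℝ × ℝ) (r : ℝ) : MeasurableSet {x : ℝ × ℝ | nrm (x - c) < r} :=
  (isOpen_lt (continuous_nrm.comp (by fun_prop)) continuous_const).measurableSet

lemma vol_ball (c : ℝ × ℝ) {r : ℝ} (hr : 0 < r) :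
    ∫ _ in {x : ℝ × ℝ | nrm (x - c) < r}, (1 : ℝ) = Real.pi * r ^ 2 := by
  have h1 := area_mean (F := fun _ => (1 : ℝ)) (ρ := r + 1) (c := c) (r := r)
    (fun x _ => continuousAt_const) (fun x _ _ => contDiffAt_const)
    (fun x _ _ => by rw [lap_const]) hr (by linarith)
  have h2 := area_mean (F := fun _ => (-1 : ℝ)) (ρ := r + 1) (c := c) (r := r)
    (fun x _ => continuousAt_const) (fun x _ _ => contDiffAt_const)
    (fun x _ _ => by rw [lap_const]) hr (by linarith)
  rw [integral_neg] at h2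
  linarith

lemma integrableOn_ball {F : ℝ × ℝ → ℝ} {c : ℝ × ℝ} {r : ℝ}
    (h : ∀ x, nrm (x - c) ≤ r → ContinuousAt F x) : IntegrableOn F {x | nrm (x - c) < r} := by
  refine IntegrableOn.mono_set (ContinuousOn.integrableOn_compact (isCompact_nrm_le c r) ?_)
    (fun x hx => by simp only [mem_ofPred_eq] at hx ⊢; exact hx.le)
  intro x hx
  exact (h x hx).continuousWithinAt

lemma eps_reg {K κ : ℝ} (hK : 0 ≤ K) (hκ : 0 < κ) : ∃ ε > 0, ∀ (F : ℝ × ℝ → ℝ) (c : ℝ × ℝ) (ρ : ℝ),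
    0 < ρ → (∀ x, nrm (x - c) ≤ ρ → ContDiffAt ℝ 2 F x) → (∀ x, nrm (x - c) ≤ ρ → 0 ≤ F x) →
    (∀ x, nrm (x - c) ≤ ρ → -K * F x ^ 2 ≤ lap F x) →
    ∫ x in {x | nrm (x - c) < ρ}, F x ≤ ε → ρ ^ 2 * F c ≤ κ := by
  set τ := min (κ / 4) (1 / (8 * K + 8)) with hτ
  have hτ0 : 0 < τ := lt_min (by linarith) (by positivity)
  have hτK : 8 * K * τ ≤ 1 := by
    have h : τ ≤ 1 / (8 * K + 8) := min_le_right _ _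
    rw [le_div_iff₀ (by positivity)] at h
    nlinarith
  have hτκ : τ ≤ κ / 4 := min_le_left _ _
  refine ⟨τ, hτ0, ?_⟩
  intro F c ρ hρ hC hF hl hIntg
  by_contra hcon
  push Not at hcon
  have cn : Continuous fun x : ℝ × ℝ => nrm (x - c) := continuous_nrm.comp (by fun_prop)
  obtain ⟨x1, hx1, hmax⟩ := (isCompact_nrm_le c ρ).exists_isMaxOn
    (f := fun x => (ρ - nrm (x - c)) ^ 2 * F x) ⟨c, by simpa [nrm_zero] using hρ.le⟩
    (fun x hx => (((continuous_const.sub cn).pow 2).continuousAt.mul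
      (hC x hx).continuousAt).continuousWithinAt)
  simp only [mem_ofPred_eq] at hx1
  have hmax' : ∀ x, nrm (x - c) ≤ ρ → (ρ - nrm (x - c)) ^ 2 * F x ≤ (ρ - nrm (x1 - c)) ^ 2 * F x1 :=
    fun x hx => hmax hx
  have hs1 : κ < (ρ - nrm (x1 - c)) ^ 2 * F x1 := by
    have := hmax' c (by simpa [nrm_zero] using hρ.le)
    simp only [sub_self, nrm_zero, sub_zero] at this
    linarith
  set σ := (ρ - nrm (x1 - c)) / 2 with hσ
  have e2 : ρ - nrm (x1 - c) = 2 * σ := by rw [hσ]; ring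
  rw [e2] at hs1 hmax'
  have hσ0 : 0 < σ := by
    rcases (show 0 ≤ σ by rw [hσ]; linarith).eq_or_lt with h | h
    · rw [← h] at hs1; norm_num at hs1; linarith
    · exact h
  set F1 := F x1 with hF1
  have hF1p : 0 < F1 := by
    by_contra h
    push Not at h
    nlinarith [sq_nonneg (2 * σ)]
  have sub : ∀ x, nrm (x - x1) ≤ σ → nrm (x - c) ≤ ρ - σ := by
    intro x hx
    have := nrm_add_le (x - x1) (x1 - c)
    rw [sub_add_sub_cancel] at this
    linarith
  have bd : ∀ x, nrm (x - x1) ≤ σ → F x ≤ 4 * F1 := by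
    intro x hx
    have h1 := sub x hx
    have h2 := hmax' x (by linarith)
    have h3 : σ ^ 2 ≤ (ρ - nrm (x - c)) ^ 2 := by nlinarith
    have h4 : σ ^ 2 * F x ≤ σ ^ 2 * (4 * F1) := by
      have := mul_le_mul_of_nonneg_right h3 (hF x (by linarith))
      nlinarith
    exact le_of_mul_le_mul_left h4 (by positivity)
  set r := Real.sqrt (τ / F1) with hr
  have hr2 : r ^ 2 = τ / F1 := Real.sq_sqrt (by positivity)
  have hr0 : 0 < r := Real.sqrt_pos.2 (by positivity)
  have hrF : r ^ 2 * F1 = τ := by rw [hr2]; field_simp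
  have hrσ : r < σ := by
    refine lt_of_pow_lt_pow_left₀ 2 hσ0.le ?_
    rw [hr2, div_lt_iff₀ hF1p]
    nlinarith
  have cN : ∀ x, ContDiffAt ℝ 2 (fun y : ℝ × ℝ => 4 * K * F1 ^ 2 *
      ((y.1 - x1.1) ^ 2 + (y.2 - x1.2) ^ 2)) x := fun x =>
    contDiffAt_const.mul (contDiff_N x1).contDiffAt
  have mv := area_mean (F := fun y => F y + 4 * K * F1 ^ 2 * ((y.1 - x1.1) ^ 2 + (y.2 - x1.2) ^ 2))
    (c := x1) (ρ := σ)
    (fun x hx => ((hC x (by linarith [sub x hx.le])).add (cN x)).continuousAt)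
    (fun x _ hx => (hC x (by linarith [sub x hx.le])).add (cN x))
    (fun x _ hx => by
      have h1 := sub x hx.le
      rw [lap_add (hC x (by linarith)) (cN x), lap_const_mul, lap_N]
      have h2 := hl x (by linarith)
      have h3 : F x ^ 2 ≤ (4 * F1) ^ 2 := pow_le_pow_left₀ (hF x (by linarith)) (bd x hx.le) 2
      nlinarith) hr0 hrσ
  have iF : IntegrableOn F {x | nrm (x - x1) < r} :=
    integrableOn_ball fun x hx => (hC x (by linarith [sub x (by linarith)])).continuousAt
  have iN : IntegrableOn (fun y => 4 * K * F1 ^ 2 * ((y.1 - x1.1) ^ 2 + (y.2 - x1.2) ^ 2))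
      {x | nrm (x - x1) < r} :=
    integrableOn_ball fun x hx => (cN x).continuousAt
  rw [integral_add iF iN] at mv
  have b1 : ∫ x in {x | nrm (x - x1) < r}, F x ≤ τ := by
    refine le_trans ?_ hIntg
    refine setIntegral_mono_set (integrableOn_ball fun x hx => (hC x hx).continuousAt) ?_ ?_
    · filter_upwards [ae_restrict_mem (ms_ball c ρ)] with x hx
      exact hF x (le_of_lt hx)
    · refine LE.le.eventuallyLE fun x hx => ?_
      simp only [mem_ofPred_eq] at hx ⊢
      have := sub x (by linarith)
      linarith
  have b2 : ∫ y in {x | nrm (x - x1) < r}, 4 * K * F1 ^ 2 * ((y.1 - x1.1) ^ 2 + (y.2 - x1.2) ^ 2)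
      ≤ 4 * K * F1 ^ 2 * r ^ 2 * (Real.pi * r ^ 2) := by
    rw [← vol_ball x1 hr0, ← integral_const_mul]
    refine setIntegral_mono_on iN (integrableOn_ball fun x hx => continuousAt_const)
      (ms_ball x1 r) fun y hy => ?_
    simp only [mem_ofPred_eq] at hy
    rw [mul_one]
    refine mul_le_mul_of_nonneg_left ?_ (by positivity)
    have : nrm (y - x1) ^ 2 ≤ r ^ 2 := pow_le_pow_left₀ (nrm_nonneg _) hy.le 2
    rw [nrm_sq] at this
    simpa using this
  simp only [sub_self] at mv
  have e3 : 4 * K * F1 ^ 2 * r ^ 2 * (Real.pi * r ^ 2) = 4 * K * Real.pi * τ ^ 2 := by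
    rw [← hrF]; ring
  have e4 : Real.pi * r ^ 2 * (F1 + 4 * K * F1 ^ 2 * (0 ^ 2 + 0 ^ 2)) = Real.pi * τ := by
    rw [← hrF]; ring
  rw [e4] at mv
  rw [e3] at b2
  have hpi := Real.pi_gt_three
  have : 4 * K * Real.pi * τ ^ 2 ≤ Real.pi * τ / 2 := by
    have : Real.pi * τ * (8 * K * τ) ≤ Real.pi * τ * 1 :=
      mul_le_mul_of_nonneg_left hτK (by positivity)
    nlinarith
  nlinarith

end

section

lemma deriv2_rpow {s p : ℝ} (hs : 0 < s) :
    deriv (deriv fun s : ℝ => s ^ p) s = p * ((p - 1) * s ^ (p - 2)) := by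
  refine deriv2_of (f' := fun s => p * s ^ (p - 1)) ?_ ?_
  · filter_upwards [Ioi_mem_nhds hs] with t ht
    exact Real.hasDerivAt_rpow_const (Or.inl (ne_of_gt ht))
  · have := (Real.hasDerivAt_rpow_const (p := p - 1) (Or.inl hs.ne')).const_mul p
    rwa [show p - 1 - 1 = p - 2 by ring] at this

lemma nrm_rpow_eq (x : ℝ × ℝ) (e : ℝ) : nrm x ^ e = (x.1 ^ 2 + x.2 ^ 2) ^ (e / 2) := by
  rw [nrm, Real.sqrt_eq_rpow, ← Real.rpow_mul (by positivity)]
  congr 1; ring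

lemma contDiffAt_nrm_rpow {x : ℝ × ℝ} (hx : x ≠ 0) (e : ℝ) :
    ContDiffAt ℝ 2 (fun y => nrm y ^ e) x := by
  simp only [nrm_rpow_eq]
  exact ContDiffAt.rpow_const_of_ne (by fun_prop) (sq_pos_of_ne hx).ne'

lemma lap_nrm_rpow {x : ℝ × ℝ} (hx : x ≠ 0) (e : ℝ) :
    lap (fun y => nrm y ^ e) x = e ^ 2 * nrm x ^ (e - 2) := by
  have hp := sq_pos_of_ne hx
  simp only [nrm_rpow_eq]
  rw [lap_radial (φ := fun s => s ^ (e / 2)) (Real.contDiffAt_rpow_const_of_ne hp.ne'),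
    deriv2_rpow hp, Real.deriv_rpow_const]
  have h1 : (x.1 ^ 2 + x.2 ^ 2) ^ (e / 2 - 1) = (x.1 ^ 2 + x.2 ^ 2) ^ (e / 2 - 2) *
      (x.1 ^ 2 + x.2 ^ 2) := by
    rw [← Real.rpow_add_one hp.ne']; congr 1; ring
  have h2 : (e - 2) / 2 = e / 2 - 1 := by ring
  rw [h2, h1]
  ring

variable {n : ℕ} {A : Matrix (Fin n) (Fin n) ℝ} {β : Fin n → ℝ} {u : Fin n → ℝ × ℝ → ℝ}

lemma tail_small {G : ℝ × ℝ → ℝ} (hG : Integrable G) {ε : ℝ} (hε : 0 < ε) :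
    ∃ N : ℕ, ∫ x in {x : ℝ × ℝ | (N : ℝ) ≤ nrm x}, G x < ε := by
  have h := tendsto_setIntegral_of_antitone (μ := volume) (f := G)
    (s := fun N : ℕ => {x : ℝ × ℝ | (N : ℝ) ≤ nrm x})
    (fun N => (isClosed_le continuous_const continuous_nrm).measurableSet)
    (fun a b hab x hx => by
      simp only [mem_ofPred_eq] at hx ⊢
      exact le_trans (by exact_mod_cast hab) hx) ⟨0, hG.integrableOn⟩
  have he : (⋂ N : ℕ, {x : ℝ × ℝ | (N : ℝ) ≤ nrm x}) = ∅ := by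
    ext x
    simp only [mem_iInter, mem_ofPred_eq, mem_empty_iff_false, iff_false, not_forall, not_le]
    exact exists_nat_gt (nrm x)
  rw [he] at h
  simp only [Measure.restrict_empty, integral_zero_measure] at h
  exact (h.eventually_lt_const hε).exists

lemma decay (hA : ∀ i j, 0 ≤ A i j) (hu : PDESolution A β u) {κ : ℝ} (hκ : 0 < κ) :
    ∃ R ≥ 1, ∀ x, R ≤ nrm x → nrm x ^ 2 * ∑ j, nrm x ^ β j * Real.exp (u j x) ≤ κ := by
  obtain ⟨hc, hC, he, hi⟩ := hu
  set G : ℝ × ℝ → ℝ := fun x => ∑ j, nrm x ^ β j * Real.exp (u j x) with hG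
  have hG0 : ∀ x, 0 ≤ G x := fun x => Finset.sum_nonneg fun j _ =>
    mul_nonneg (Real.rpow_nonneg (nrm_nonneg x) _) (Real.exp_pos _).le
  have hGC : ∀ x, x ≠ 0 → ContDiffAt ℝ 2 G x := fun x hx =>
    ContDiffAt.sum fun j _ => contDiffAt_G hx _ (hC j x hx)
  have hGi : Integrable G := integrable_finsetSum _ fun j _ => hi j
  have hGl : ∀ x, x ≠ 0 → -(∑ i, ∑ j, A i j) * G x ^ 2 ≤ lap G x := by
    intro x hx
    rw [hG, lap_sum _ fun j _ => contDiffAt_G hx _ (hC j x hx)]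
    rw [neg_mul, Finset.sum_mul, ← Finset.sum_neg_distrib]
    refine Finset.sum_le_sum fun i _ => ?_
    refine le_trans ?_ (lap_G hx (β i) (hC i x hx))
    have h1 : lap (u i) x = -∑ j, A i j * nrm x ^ β j * Real.exp (u j x) := by
      linarith [he i x hx]
    rw [h1, mul_neg, neg_le_neg_iff, Finset.mul_sum, Finset.sum_mul]
    refine Finset.sum_le_sum fun j _ => ?_
    have t : ∀ k, 0 ≤ nrm x ^ β k * Real.exp (u k x) := fun k =>
      mul_nonneg (Real.rpow_nonneg (nrm_nonneg x) _) (Real.exp_pos _).le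
    have le1 : ∀ k, nrm x ^ β k * Real.exp (u k x) ≤ G x := fun k =>
      Finset.single_le_sum (f := fun k => nrm x ^ β k * Real.exp (u k x)) (fun k _ => t k)
        (Finset.mem_univ k)
    calc nrm x ^ β i * Real.exp (u i x) * (A i j * nrm x ^ β j * Real.exp (u j x))
        = A i j * ((nrm x ^ β i * Real.exp (u i x)) * (nrm x ^ β j * Real.exp (u j x))) := by ring
      _ ≤ A i j * (G x * G x) := mul_le_mul_of_nonneg_left
          (mul_le_mul (le1 i) (le1 j) (t j) (hG0 x)) (hA i j)
      _ = A i j * G x ^ 2 := by ring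
  obtain ⟨ε, hε, H⟩ := eps_reg (K := ∑ i, ∑ j, A i j) (κ := κ / 4)
    (Finset.sum_nonneg fun i _ => Finset.sum_nonneg fun j _ => hA i j) (by linarith)
  obtain ⟨N, hN⟩ := tail_small hGi hε
  refine ⟨2 * (N + 1), by have : (0 : ℝ) ≤ N := Nat.cast_nonneg N; linarith, fun x hx => ?_⟩
  have hN0 : (0 : ℝ) ≤ N := Nat.cast_nonneg N
  have far : ∀ y, nrm (y - x) ≤ nrm x / 2 → (N : ℝ) + 1 ≤ nrm y := by
    intro y hy
    have := nrm_add_le (x - y) y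
    rw [sub_add_cancel, nrm_sub_comm] at this
    linarith
  have ne0 : ∀ y, nrm (y - x) ≤ nrm x / 2 → y ≠ 0 := by
    rintro y hy rfl
    have := far 0 hy
    rw [nrm_zero] at this
    linarith
  have := H G x (nrm x / 2) (by linarith) (fun y hy => hGC y (ne0 y hy)) (fun y _ => hG0 y)
    (fun y hy => hGl y (ne0 y hy)) ?_
  · nlinarith
  · refine le_trans ?_ hN.le
    refine setIntegral_mono_set hGi.integrableOn (Eventually.of_forall fun y => hG0 y) ?_
    refine LE.le.eventuallyLE fun y hy => ?_
    simp only [mem_ofPred_eq] at hy ⊢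
    linarith [far y hy.le]

lemma exists_bd (hu : ∀ i, Continuous (u i)) (R : ℝ) : ∃ C, ∀ i, ∀ x, nrm x ≤ R → u i x ≤ C := by
  have : ∀ i, ∃ C, ∀ x, nrm x ≤ R → u i x ≤ C := by
    intro i
    obtain ⟨C, hC⟩ := (isCompact_nrm_le' R).bddAbove_image (hu i).continuousOn
    exact ⟨C, fun x hx => hC ⟨x, hx, rfl⟩⟩
  choose C hC using this
  refine ⟨∑ i, |C i|, fun i x hx => (hC i x hx).trans ((le_abs_self _).trans ?_)⟩
  exact Finset.single_le_sum (f := fun i => |C i|) (fun i _ => abs_nonneg _) (Finset.mem_univ i)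

lemma upper (hβ : ∀ i, -2 < β i ∧ β i ≤ 0) (hA : ∀ i j, 0 ≤ A i j) (hu : PDESolution A β u) :
    ∃ C ≥ 0, ∀ i x, u i x ≤ C := by
  obtain ⟨R, hR, H⟩ := decay hA hu one_pos
  obtain ⟨C, hC⟩ := exists_bd hu.1 R
  refine ⟨max C 0, le_max_right _ _, fun i x => ?_⟩
  rcases le_total (nrm x) R with h | h
  · exact (hC i x h).trans (le_max_left _ _)
  · refine le_trans ?_ (le_max_right _ _)
    have h1 := H x h
    have t : ∀ k, 0 ≤ nrm x ^ β k * Real.exp (u k x) := fun k =>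
      mul_nonneg (Real.rpow_nonneg (nrm_nonneg x) _) (Real.exp_pos _).le
    have le1 : nrm x ^ β i * Real.exp (u i x) ≤ ∑ k, nrm x ^ β k * Real.exp (u k x) :=
      Finset.single_le_sum (f := fun k => nrm x ^ β k * Real.exp (u k x)) (fun k _ => t k)
        (Finset.mem_univ i)
    have hpos : 0 < nrm x := by linarith
    have h2 : nrm x ^ (2 + β i) * Real.exp (u i x) ≤ 1 := by
      rw [Real.rpow_add hpos, Real.rpow_two]
      nlinarith [mul_le_mul_of_nonneg_left le1 (sq_nonneg (nrm x))]
    have h3 : 1 ≤ nrm x ^ (2 + β i) :=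
      Real.one_le_rpow (by linarith) (by linarith [(hβ i).1])
    have h4 : Real.exp (u i x) ≤ 1 := by nlinarith [Real.exp_pos (u i x)]
    exact Real.exp_le_one_iff.1 h4

lemma exists_eps (hβ : ∀ i, -2 < β i) : ∃ ε > 0, ε ≤ 1 / 8 ∧ ∀ i, ε ≤ 2 + β i := by
  have : ∀ s : Finset (Fin n), ∃ ε > 0, ε ≤ (1 / 8 : ℝ) ∧ ∀ i ∈ s, ε ≤ 2 + β i := by
    intro s
    induction s using Finset.induction_on with
    | empty => exact ⟨1 / 8, by norm_num, le_rfl, by simp⟩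
    | insert i s hi ih =>
      obtain ⟨ε, h0, h1, h2⟩ := ih
      refine ⟨min ε (2 + β i), lt_min h0 (by linarith [hβ i]), (min_le_left _ _).trans h1, ?_⟩
      intro j hj
      rcases Finset.mem_insert.1 hj with rfl | hj
      · exact min_le_right _ _
      · exact (min_le_left _ _).trans (h2 j hj)
  obtain ⟨ε, h0, h1, h2⟩ := this Finset.univ
  exact ⟨ε, h0, h1, fun i => h2 i (Finset.mem_univ i)⟩

lemma G_bound (hA : ∀ i j, 0 ≤ A i j) (hu : PDESolution A β u)
    {ε : ℝ} (hε : 0 < ε) (hεβ : ∀ i, ε ≤ 2 + β i) :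
    ∃ C ≥ 0, ∀ x, x ≠ 0 → ∑ j, nrm x ^ β j * Real.exp (u j x) ≤ C * nrm x ^ (ε - 2) := by
  obtain ⟨R, hR, H⟩ := decay hA hu one_pos
  obtain ⟨C, hC⟩ := exists_bd hu.1 R
  set C' : ℝ := ∑ j, R ^ (2 + β j - ε) * Real.exp C
  have hC' : 0 ≤ C' := Finset.sum_nonneg fun j _ =>
    mul_nonneg (Real.rpow_nonneg (by linarith) _) (Real.exp_pos _).le
  refine ⟨C' + 1, by linarith, fun x hx => ?_⟩
  have hpos := nrm_pos hx
  rcases le_total (nrm x) R with h | h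
  · have : ∑ j, nrm x ^ β j * Real.exp (u j x) ≤ C' * nrm x ^ (ε - 2) := by
      rw [Finset.sum_mul]
      refine Finset.sum_le_sum fun j _ => ?_
      have e : nrm x ^ β j = nrm x ^ (2 + β j - ε) * nrm x ^ (ε - 2) := by
        rw [← Real.rpow_add hpos]; congr 1; ring
      have h1 : nrm x ^ (2 + β j - ε) ≤ R ^ (2 + β j - ε) :=
        Real.rpow_le_rpow hpos.le h (by linarith [hεβ j])
      have h2 : Real.exp (u j x) ≤ Real.exp C := Real.exp_le_exp.2 (hC j x h)
      have h3 := Real.rpow_pos_of_pos hpos (ε - 2)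
      rw [e]
      calc _ = (nrm x ^ (2 + β j - ε) * Real.exp (u j x)) * nrm x ^ (ε - 2) := by ring
        _ ≤ _ := by
          refine mul_le_mul_of_nonneg_right ?_ h3.le
          exact mul_le_mul h1 h2 (Real.exp_pos _).le (Real.rpow_nonneg (by linarith) _)
    have h3 := Real.rpow_pos_of_pos hpos (ε - 2)
    linarith
  · have h1 := H x h
    have h2 : ∑ j, nrm x ^ β j * Real.exp (u j x) ≤ nrm x ^ (-2 : ℝ) := by
      rw [Real.rpow_neg hpos.le, Real.rpow_two, ← one_div, le_div_iff₀ (by positivity)]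
      linarith
    have h3 : nrm x ^ (-2 : ℝ) ≤ nrm x ^ (ε - 2) :=
      Real.rpow_le_rpow_of_exponent_le (by linarith) (by linarith)
    have h4 := Real.rpow_pos_of_pos hpos (ε - 2)
    nlinarith

lemma lower (hβ : ∀ i, -2 < β i ∧ β i ≤ 0) (hA : ∀ i j, 0 ≤ A i j) (hu : PDESolution A β u) :
    ∃ C : ℝ, 0 ≤ C ∧ ∃ ε : ℝ, 0 < ε ∧ ε ≤ 1 / 8 ∧ ∀ i x, |u i x| ≤ C * (1 + nrm x ^ ε) := by
  obtain ⟨ε, hε, hε8, hεβ⟩ := exists_eps (fun i => (hβ i).1)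
  obtain ⟨C1, hC1, hG⟩ := G_bound hA hu hε hεβ
  obtain ⟨M, hM, hup⟩ := upper hβ hA hu
  obtain ⟨hc, hC, he, hi⟩ := hu
  -- constant with `lap (u i) ≥ - C2 nrm ^ (ε - 2)`
  set C2 : ℝ := (∑ i, ∑ j, A i j) * C1 with hC2
  have hAs : 0 ≤ ∑ i, ∑ j, A i j :=
    Finset.sum_nonneg fun i _ => Finset.sum_nonneg fun j _ => hA i j
  have hC20 : 0 ≤ C2 := mul_nonneg hAs hC1
  have hlow : ∀ i x, x ≠ 0 → -(C2 * nrm x ^ (ε - 2)) ≤ lap (u i) x := by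
    intro i x hx
    have h1 : lap (u i) x = -∑ j, A i j * nrm x ^ β j * Real.exp (u j x) := by
      linarith [he i x hx]
    rw [h1, neg_le_neg_iff]
    have t : ∀ k, 0 ≤ nrm x ^ β k * Real.exp (u k x) := fun k =>
      mul_nonneg (Real.rpow_nonneg (nrm_nonneg x) _) (Real.exp_pos _).le
    calc ∑ j, A i j * nrm x ^ β j * Real.exp (u j x)
        ≤ ∑ j, (∑ i, ∑ j, A i j) * (nrm x ^ β j * Real.exp (u j x)) := by
          refine Finset.sum_le_sum fun j _ => ?_
          rw [mul_assoc]
          refine mul_le_mul_of_nonneg_right ?_ (t j)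
          have a1 : A i j ≤ ∑ j, A i j :=
            Finset.single_le_sum (f := fun j => A i j) (fun j _ => hA i j) (Finset.mem_univ j)
          have a2 : ∑ j, A i j ≤ ∑ i, ∑ j, A i j :=
            Finset.single_le_sum (f := fun i => ∑ j, A i j)
              (fun i _ => Finset.sum_nonneg fun j _ => hA i j) (Finset.mem_univ i)
          linarith
      _ = (∑ i, ∑ j, A i j) * ∑ j, (nrm x ^ β j * Real.exp (u j x)) := by rw [Finset.mul_sum]
      _ ≤ _ := by
        rw [hC2, mul_assoc]
        exact mul_le_mul_of_nonneg_left (hG x hx) hAs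
  have hneg : ∀ i x, x ≠ 0 → lap (u i) x ≤ 0 := by
    intro i x hx
    have : 0 ≤ ∑ j, A i j * nrm x ^ β j * Real.exp (u j x) :=
      Finset.sum_nonneg fun j _ => mul_nonneg (mul_nonneg (hA i j)
        (Real.rpow_nonneg (nrm_nonneg x) _)) (Real.exp_pos _).le
    linarith [he i x hx]
  set P : ℝ := C2 / ε ^ 2 with hP
  have hP0 : 0 ≤ P := by positivity
  have cP : Continuous fun y : ℝ × ℝ => P * nrm y ^ ε :=
    continuous_const.mul (continuous_nrm.rpow_const fun x => Or.inr hε.le)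
  have hpi := Real.pi_pos
  -- average bound on balls centred at the origin
  have avg : ∀ i, ∀ r > 0, ∫ x in {x | nrm x < r}, (M - u i x) ≤
      Real.pi * r ^ 2 * (M + |u i 0| + P * r ^ ε) := by
    intro i r hr
    have mv := area_mean (F := fun y => u i y + P * nrm y ^ ε) (c := 0) (ρ := r + 1) (r := r)
      (fun x _ => ((hc i).add cP).continuousAt)
      (fun x hx _ => (hC i x hx).add (contDiffAt_const.mul (contDiffAt_nrm_rpow hx ε)))
      (fun x hx _ => by
        rw [lap_add (hC i x hx) (contDiffAt_const.mul (contDiffAt_nrm_rpow hx ε)),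
          lap_const_mul, lap_nrm_rpow hx]
        have h1 := hlow i x hx
        have h2 : P * (ε ^ 2 * nrm x ^ (ε - 2)) = C2 * nrm x ^ (ε - 2) := by
          rw [hP]; field_simp
        linarith) hr (by linarith)
    have iu : IntegrableOn (u i) {x | nrm (x - 0) < r} :=
      integrableOn_ball fun x _ => (hc i).continuousAt
    have iP : IntegrableOn (fun y : ℝ × ℝ => P * nrm y ^ ε) {x | nrm (x - 0) < r} :=
      integrableOn_ball fun x _ => cP.continuousAt
    have iM : IntegrableOn (fun _ : ℝ × ℝ => M) {x | nrm (x - 0) < r} :=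
      integrableOn_ball fun x _ => continuousAt_const
    have vol := vol_ball 0 hr
    have eM : ∫ _ in {x : ℝ × ℝ | nrm (x - 0) < r}, M = M * (Real.pi * r ^ 2) := by
      rw [← vol, ← integral_const_mul, mul_one]
    have bP : ∫ y in {x : ℝ × ℝ | nrm (x - 0) < r}, P * nrm y ^ ε ≤ P * r ^ ε * (Real.pi * r ^ 2) := by
      rw [← vol, ← integral_const_mul, mul_one]
      refine setIntegral_mono_on iP (integrableOn_ball fun x _ => continuousAt_const)
        (ms_ball 0 r) fun y hy => ?_
      simp only [mem_ofPred_eq, sub_zero] at hy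
      exact mul_le_mul_of_nonneg_left (Real.rpow_le_rpow (nrm_nonneg y) hy.le hε.le) hP0
    rw [integral_add iu iP] at mv
    have : ∫ x in {x | nrm (x - 0) < r}, (M - u i x) = M * (Real.pi * r ^ 2) -
        ∫ x in {x | nrm (x - 0) < r}, u i x := by
      rw [integral_sub iM iu, eM]
    simp only [sub_zero] at this mv bP
    rw [this]
    rw [nrm_zero, Real.zero_rpow hε.ne', mul_zero, add_zero] at mv
    have habs := neg_abs_le (u i 0)
    have : Real.pi * r ^ 2 * (-|u i 0|) ≤ Real.pi * r ^ 2 * u i 0 :=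
      mul_le_mul_of_nonneg_left habs (by positivity)
    nlinarith
  -- pointwise
  have pt : ∀ i x, x ≠ 0 → M - u i x ≤ 16 * (M + |u i 0| + P * (2 * nrm x) ^ ε) := by
    intro i x hx
    have hp := nrm_pos hx
    have nz : ∀ y, nrm (y - x) < nrm x → y ≠ 0 := by
      rintro y hy rfl
      rw [zero_sub, nrm_neg] at hy
      exact lt_irrefl _ hy
    have mv := area_mean (F := fun y => M + (-1) * u i y) (c := x) (ρ := nrm x) (r := nrm x / 2)
      (fun y _ => (continuous_const.add (continuous_const.mul (hc i))).continuousAt)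
      (fun y _ hy => contDiffAt_const.add (contDiffAt_const.mul (hC i y (nz y hy))))
      (fun y _ hy => by
        rw [lap_add contDiffAt_const (contDiffAt_const.mul (hC i y (nz y hy))), lap_const,
          lap_const_mul]
        linarith [hneg i y (nz y hy)]) (by linarith) (by linarith)
    have e : ∀ y, M + (-1) * u i y = M - u i y := fun y => by ring
    simp only [e] at mv
    have h2 := avg i (2 * nrm x) (by linarith)
    have h3 : ∫ y in {y | nrm (y - x) < nrm x / 2}, (M - u i y) ≤
        ∫ y in {y | nrm y < 2 * nrm x}, (M - u i y) := by
      refine setIntegral_mono_set ?_ (Eventually.of_forall fun y => ?_) ?_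
      · have := integrableOn_ball (F := fun y => M - u i y) (c := 0) (r := 2 * nrm x) fun y _ =>
          (continuous_const.sub (hc i)).continuousAt
        simpa using this
      · exact sub_nonneg.2 (hup i y)
      · refine LE.le.eventuallyLE fun y hy => ?_
        simp only [mem_ofPred_eq] at hy ⊢
        have := nrm_add_le (y - x) x
        rw [sub_add_cancel] at this
        linarith
    have h4 : Real.pi * (nrm x / 2) ^ 2 * (M - u i x) ≤
        Real.pi * (nrm x / 2) ^ 2 * (16 * (M + |u i 0| + P * (2 * nrm x) ^ ε)) := by
      refine (mv.trans (h3.trans h2)).trans (le_of_eq ?_)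
      ring
    exact le_of_mul_le_mul_left h4 (by positivity)
  set S : ℝ := ∑ i, |u i 0| with hS
  have hSi : ∀ i, |u i 0| ≤ S := fun i =>
    Finset.single_le_sum (f := fun i => |u i 0|) (fun i _ => abs_nonneg _) (Finset.mem_univ i)
  have hS0 : 0 ≤ S := Finset.sum_nonneg fun i _ => abs_nonneg _
  refine ⟨16 * (M + S) + 32 * P, by positivity, ε, hε, hε8, fun i x => ?_⟩
  have hre : 0 ≤ nrm x ^ ε := Real.rpow_nonneg (nrm_nonneg x) _
  rcases eq_or_ne x 0 with rfl | hx
  · have := hSi i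
    nlinarith [mul_nonneg (show 0 ≤ 16 * (M + S) + 32 * P by positivity) hre]
  · have h1 := pt i x hx
    have h2 := hup i x
    have h3 : (2 * nrm x) ^ ε ≤ 2 * nrm x ^ ε := by
      rw [Real.mul_rpow (by norm_num) (nrm_nonneg x)]
      refine mul_le_mul_of_nonneg_right ?_ hre
      calc (2 : ℝ) ^ ε ≤ 2 ^ (1 : ℝ) := Real.rpow_le_rpow_of_exponent_le (by norm_num) (by linarith)
        _ = 2 := Real.rpow_one 2
    have h4 := mul_le_mul_of_nonneg_left h3 hP0
    have h5 := hSi i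
    have h6 : 0 ≤ (M + S) * nrm x ^ ε := by positivity
    rw [abs_le]
    constructor
    · nlinarith
    · nlinarith

end

section

lemma lap_fst (x : ℝ × ℝ) : lap (fun y => y.1) x = 0 := by
  simp [lap]

lemma contDiffAt_nrm {x : ℝ × ℝ} (hx : x ≠ 0) : ContDiffAt ℝ 2 nrm x := by
  have := contDiffAt_nrm_rpow hx 1
  simpa only [Real.rpow_one] using this

lemma fst_le_nrm (x : ℝ × ℝ) : x.1 ≤ nrm x :=
  Real.le_sqrt_of_sq_le (by nlinarith [sq_nonneg x.2])

lemma lap_q {x : ℝ × ℝ} (hx : 0 < x.1) :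
    lap (fun y => (nrm y + y.1) ^ (1 / 4 : ℝ)) x ≤
      -((nrm x + x.1) ^ (1 / 4 : ℝ) / (16 * nrm x ^ 2)) := by
  have hx0 : x ≠ 0 := by rintro rfl; simp at hx
  have hp := nrm_pos hx0
  have hle := fst_le_nrm x
  have hq : 0 < nrm x + x.1 := by linarith
  have hQ : ContDiffAt ℝ 2 (fun y : ℝ × ℝ => nrm y + y.1) x :=
    (contDiffAt_nrm hx0).add contDiffAt_fst
  have hL : lap (fun y : ℝ × ℝ => nrm y + y.1) x = 1 / nrm x := by
    rw [lap_add (contDiffAt_nrm hx0) contDiffAt_fst, lap_fst]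
    have := lap_nrm_rpow hx0 1
    simp only [Real.rpow_one] at this
    rw [show (1 : ℝ) - 2 = -1 by norm_num, Real.rpow_neg_one] at this
    rw [this]; ring
  have hs := nrm_sq x
  have d1 : deriv (fun s => nrm (s, x.2) + s) x.1 = x.1 / nrm x + 1 := by
    refine HasDerivAt.deriv (HasDerivAt.add ?_ (hasDerivAt_id _))
    have h := ((hasDerivAt_sq_sub 0 x.1).add_const (x.2 ^ 2))
    simp only [sub_zero] at h
    have := h.sqrt (sq_pos_of_ne hx0).ne'
    refine this.congr_deriv ?_
    rw [show nrm x = √(x.1 ^ 2 + x.2 ^ 2) from rfl]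
    field_simp
  have d2 : deriv (fun s => nrm (x.1, s) + x.1) x.2 = x.2 / nrm x := by
    refine HasDerivAt.deriv (HasDerivAt.add_const _ ?_)
    have h := ((hasDerivAt_sq_sub 0 x.2).const_add (x.1 ^ 2))
    simp only [sub_zero] at h
    have := h.sqrt (sq_pos_of_ne hx0).ne'
    refine this.congr_deriv ?_
    rw [show nrm x = √(x.1 ^ 2 + x.2 ^ 2) from rfl]
    field_simp
  rw [lap_comp (φ := fun s => s ^ (1 / 4 : ℝ)) hQ (Real.contDiffAt_rpow_const_of_ne hq.ne'),
    deriv2_rpow hq, Real.deriv_rpow_const, hL]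
  simp only [d1, d2]
  have hg : (x.1 / nrm x + 1) ^ 2 + (x.2 / nrm x) ^ 2 = 2 * (nrm x + x.1) / nrm x := by
    field_simp
    nlinarith
  rw [hg, Real.rpow_sub hq, Real.rpow_sub hq, Real.rpow_one, Real.rpow_two]
  have h4 := Real.rpow_pos_of_pos hq (1 / 4 : ℝ)
  generalize (nrm x + x.1) ^ (1 / 4 : ℝ) = t at *
  have e : 1 / 4 * ((1 / 4 - 1) * (t / (nrm x + x.1) ^ 2)) * (2 * (nrm x + x.1) / nrm x) +
      1 / 4 * (t / (nrm x + x.1)) * (1 / nrm x) = -(t / (8 * (nrm x + x.1) * nrm x)) := by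
    field_simp; ring
  rw [e, neg_le_neg_iff]
  exact div_le_div_of_nonneg_left h4.le (by positivity) (by nlinarith)

/-- comparison function -/
noncomputable def qf (l : ℝ) (x : ℝ × ℝ) : ℝ :=
  (nrm (l + 1 - x.1, x.2) + (l + 1 - x.1)) ^ (1 / 4 : ℝ)

noncomputable def gf (K l : ℝ) (x : ℝ × ℝ) : ℝ :=
  qf l x + (1 + (-1) * Real.exp (K * (x.1 - l)))

lemma qf_ge_one {l : ℝ} {x : ℝ × ℝ} (hx : x.1 ≤ l) : 1 ≤ qf l x := by
  unfold qf
  have := nrm_nonneg (l + 1 - x.1, x.2)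
  exact Real.one_le_rpow (by linarith) (by norm_num)

lemma gf_le {K l : ℝ} {x : ℝ × ℝ} (hx : x.1 ≤ l) : gf K l x ≤ 2 * qf l x := by
  have := qf_ge_one hx
  have := Real.exp_pos (K * (x.1 - l))
  unfold gf; linarith

lemma qf_le {l : ℝ} {x : ℝ × ℝ} (hl : l ≤ 0) (hx : x.1 ≤ l) : qf l x ≤ 2 * (nrm x + 1) := by
  have h0 := nrm_nonneg (l + 1 - x.1, x.2)
  have h1 : nrm (l + 1 - x.1, x.2) ≤ nrm x + 1 := by
    refine Real.sqrt_le_iff.2 ⟨by linarith [nrm_nonneg x], ?_⟩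
    have a := nrm_sq x
    have b : -x.1 ≤ nrm x := by
      refine Real.le_sqrt_of_sq_le (by nlinarith [sq_nonneg x.2])
    simp only
    nlinarith
  have h2 := fst_le_nrm (l + 1 - x.1, x.2)
  simp only at h2
  unfold qf
  calc (nrm (l + 1 - x.1, x.2) + (l + 1 - x.1)) ^ (1 / 4 : ℝ)
      ≤ (nrm (l + 1 - x.1, x.2) + (l + 1 - x.1)) ^ (1 : ℝ) :=
        Real.rpow_le_rpow_of_exponent_le (by linarith) (by norm_num)
    _ ≤ _ := by rw [Real.rpow_one]; linarith

lemma le_gf {K l : ℝ} (hK : 0 ≤ K) {x : ℝ × ℝ} (hx : x.1 ≤ l) : qf l x ≤ gf K l x := by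
  have : Real.exp (K * (x.1 - l)) ≤ 1 := Real.exp_le_one_iff.2 (by nlinarith)
  unfold gf; linarith

lemma qf_growth {l : ℝ} (hl : l ≤ 0) {x : ℝ × ℝ} (hx : x.1 ≤ l) (h : 2 * (1 - l) ≤ nrm x) :
    (nrm x / 2) ^ (1 / 4 : ℝ) ≤ qf l x := by
  unfold qf
  refine Real.rpow_le_rpow (by linarith [nrm_nonneg x]) ?_ (by norm_num)
  have h1 := nrm_add_le (l + 1 - x.1, x.2) (-(l + 1), 0)
  have e : ((l + 1 - x.1, x.2) : ℝ × ℝ) + (-(l + 1), 0) = (-x.1, x.2) := by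
    ext <;> simp <;> ring
  have e2 : nrm (-x.1, x.2) = nrm x := by simp [nrm]
  have e3 : nrm (-(l + 1), (0 : ℝ)) = |l + 1| := by simp [nrm, Real.sqrt_sq_eq_abs]; rw [← abs_neg]; congr 1; ring
  have e4 : |l + 1| ≤ 1 - l := abs_le.2 ⟨by linarith, by linarith⟩
  rw [e, e2, e3] at h1
  linarith

lemma ne0 {l : ℝ} {x : ℝ × ℝ} (hx : x.1 < l + 1) : ((l + 1 - x.1, x.2) : ℝ × ℝ) ≠ 0 := by
  intro h
  have := congrArg Prod.fst h
  simp at this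
  linarith

lemma contDiffAt_qf {l : ℝ} {x : ℝ × ℝ} (hx : x.1 < l + 1) : ContDiffAt ℝ 2 (qf l) x := by
  unfold qf
  refine ContDiffAt.rpow_const_of_ne (ContDiffAt.add ?_ (by fun_prop)) ?_
  · exact ContDiffAt.comp (f := fun y : ℝ × ℝ => (l + 1 - y.1, y.2)) x (contDiffAt_nrm (ne0 hx))
      (by fun_prop)
  · have := nrm_nonneg (l + 1 - x.1, x.2)
    exact ne_of_gt (by linarith)

lemma contDiffAt_gf {K l : ℝ} {x : ℝ × ℝ} (hx : x.1 < l + 1) : ContDiffAt ℝ 2 (gf K l) x :=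
  (contDiffAt_qf hx).add (by fun_prop)

lemma lap_e (K l : ℝ) (x : ℝ × ℝ) :
    lap (fun y => Real.exp (K * (y.1 - l))) x = K ^ 2 * Real.exp (K * (x.1 - l)) := by
  simp only [lap, deriv_const', add_zero]
  have h : ∀ s, HasDerivAt (fun s => Real.exp (K * (s - l))) (Real.exp (K * (s - l)) * K) s := by
    intro s
    simpa using (((hasDerivAt_id s).sub_const l).const_mul K).exp
  rw [deriv2_of (Eventually.of_forall h) ((h x.1).mul_const K)]
  ring

lemma lap_gf {K l : ℝ} {x : ℝ × ℝ} (hx : x.1 < l + 1) :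
    lap (gf K l) x ≤ -(qf l x / (16 * nrm (l + 1 - x.1, x.2) ^ 2)) -
      K ^ 2 * Real.exp (K * (x.1 - l)) := by
  have e : lap (gf K l) x = lap (qf l) x + (0 + (-1) * lap (fun y => Real.exp (K * (y.1 - l))) x) := by
    rw [← lap_const_mul, ← lap_const 1 x, ← lap_add (by fun_prop) (by fun_prop),
      ← lap_add (contDiffAt_qf hx) (by fun_prop)]
    rfl
  have h1 : lap (qf l) x ≤ -(qf l x / (16 * nrm (l + 1 - x.1, x.2) ^ 2)) := by
    have h2 := lap_refl (fun y => (nrm y + y.1) ^ (1 / 4 : ℝ)) (l + 1) x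
    have h3 := lap_q (x := (l + 1 - x.1, x.2)) (by simp; linarith)
    unfold qf
    simp only at h2 h3 ⊢
    rw [h2]; exact h3
  rw [e, lap_e]
  linarith

/-- far from the origin -/
lemma gf_far {K l c : ℝ} {x : ℝ × ℝ} (hl : l ≤ 0) (hx : x.1 < l) (h1 : 1 ≤ nrm x)
    (hc : nrm x ^ 2 * c ≤ 1 / 256) (hc0 : 0 ≤ c) : lap (gf K l) x + c * gf K l x < 0 := by
  have h2 := lap_gf (K := K) (l := l) (x := x) (by linarith)
  have h3 := gf_le (K := K) hx.le
  have h4 := qf_ge_one hx.le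
  have h5 : 0 ≤ K ^ 2 * Real.exp (K * (x.1 - l)) := by positivity
  have h6 : nrm (l + 1 - x.1, x.2) ^ 2 ≤ 4 * nrm x ^ 2 := by
    rw [nrm_sq, nrm_sq]
    have b : -x.1 ≤ nrm x := Real.le_sqrt_of_sq_le (by nlinarith [sq_nonneg x.2])
    have a := nrm_sq x
    simp only
    nlinarith
  have hz : 0 < nrm (l + 1 - x.1, x.2) := nrm_pos (ne0 (by linarith))
  have h7 : qf l x / (16 * (4 * nrm x ^ 2)) ≤ qf l x / (16 * nrm (l + 1 - x.1, x.2) ^ 2) :=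
    div_le_div_of_nonneg_left (by linarith) (by positivity) (by linarith)
  have h8 : c * gf K l x ≤ c * (2 * qf l x) := mul_le_mul_of_nonneg_left h3 hc0
  have h9 : c * (2 * qf l x) < qf l x / (16 * (4 * nrm x ^ 2)) := by
    rw [lt_div_iff₀ (by positivity)]
    nlinarith
  linarith

/-- narrow strip -/
lemma gf_strip {K l c C R : ℝ} {x : ℝ × ℝ} (hl : l ≤ 0) (hx : x.1 < l) (hK : 0 < K)
    (hs : l - 1 / K < x.1) (hR : nrm x ≤ R) (hc : c ≤ C) (hc0 : 0 ≤ c)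
    (hKC : 4 * C * (R + 1) * Real.exp 1 < K ^ 2) : lap (gf K l) x + c * gf K l x < 0 := by
  have h2 := lap_gf (K := K) (l := l) (x := x) (by linarith)
  have h3 := gf_le (K := K) hx.le
  have h4 := qf_ge_one hx.le
  have h5 : 0 ≤ qf l x / (16 * nrm (l + 1 - x.1, x.2) ^ 2) := by positivity
  have h6 := qf_le hl hx.le
  have h7 : Real.exp (-1) ≤ Real.exp (K * (x.1 - l)) := by
    refine Real.exp_le_exp.2 ?_
    have : K * (l - x.1) < K * (1 / K) := mul_lt_mul_of_pos_left (by linarith) hK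
    rw [mul_one_div_cancel hK.ne'] at this
    linarith
  have h8 : c * gf K l x ≤ C * (4 * (R + 1)) :=
    mul_le_mul hc (by linarith) (by have := le_gf hK.le hx.le; linarith) (by linarith)
  have h9 : C * (4 * (R + 1)) < K ^ 2 * Real.exp (-1) := by
    rw [Real.exp_neg, ← div_eq_mul_inv, lt_div_iff₀ (Real.exp_pos 1)]
    linarith
  have h10 := mul_le_mul_of_nonneg_left h7 (sq_nonneg K)
  linarith

end

section

variable {n : ℕ} {A : Matrix (Fin n) (Fin n) ℝ} {β : Fin n → ℝ} {u : Fin n → ℝ × ℝ → ℝ}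

/-- difference with the reflected function -/
def Wf (u : Fin n → ℝ × ℝ → ℝ) (l : ℝ) (i : Fin n) (x : ℝ × ℝ) : ℝ :=
  u i (2 * l - x.1, x.2) + (-1) * u i x

/-- the coefficient -/
noncomputable def cf (A : Matrix (Fin n) (Fin n) ℝ) (β : Fin n → ℝ) (u : Fin n → ℝ × ℝ → ℝ)
    (i : Fin n) (x : ℝ × ℝ) : ℝ := ∑ j, A i j * nrm x ^ β j * Real.exp (u j x)

lemma cf_nonneg (hA : ∀ i j, 0 ≤ A i j) (i : Fin n) (x : ℝ × ℝ) : 0 ≤ cf A β u i x :=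
  Finset.sum_nonneg fun j _ => mul_nonneg (mul_nonneg (hA i j)
        (Real.rpow_nonneg (nrm_nonneg x) _)) (Real.exp_pos _).le

lemma continuous_Wf2 (hu : ∀ i, Continuous (u i)) (i : Fin n) :
    Continuous fun p : ℝ × (ℝ × ℝ) => Wf u p.1 i p.2 := by
  unfold Wf
  have := hu i
  fun_prop

lemma continuous_Wf (hu : ∀ i, Continuous (u i)) (l : ℝ) (i : Fin n) : Continuous (Wf u l i) := by
  unfold Wf
  have := hu i
  fun_prop

lemma ne_of_neg {x : ℝ × ℝ} (hx : x.1 < 0) : x ≠ 0 := by rintro rfl; simp at hx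

lemma refl_ne {l : ℝ} {x : ℝ × ℝ} (hx : x ≠ (2 * l, 0)) : ((2 * l - x.1, x.2) : ℝ × ℝ) ≠ 0 := by
  intro h
  apply hx
  have h1 := congrArg Prod.fst h
  have h2 := congrArg Prod.snd h
  simp at h1 h2
  ext
  · simp; linarith
  · simpa using h2

lemma contDiffAt_Wf (hu : PDESolution A β u) {l : ℝ} (hl : l < 0) (i : Fin n) {x : ℝ × ℝ}
    (hx : x.1 < l) (hx2 : x ≠ (2 * l, 0)) : ContDiffAt ℝ 2 (Wf u l i) x := by
  unfold Wf
  refine ContDiffAt.add ?_ (contDiffAt_const.mul (hu.2.1 i x (ne_of_neg (by linarith))))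
  exact ContDiffAt.comp (f := fun y : ℝ × ℝ => (2 * l - y.1, y.2)) x (hu.2.1 i _ (refl_ne hx2))
      (by fun_prop)

lemma lap_Wf (hu : PDESolution A β u) {l : ℝ} (hl : l < 0) (i : Fin n) {x : ℝ × ℝ}
    (hx : x.1 < l) (hx2 : x ≠ (2 * l, 0)) : lap (Wf u l i) x =
      -∑ j, A i j * (nrm (2 * l - x.1, x.2) ^ β j * Real.exp (u j (2 * l - x.1, x.2)) -
        nrm x ^ β j * Real.exp (u j x)) := by
  have h0 := ne_of_neg (x := x) (by linarith)
  have c1 : ContDiffAt ℝ 2 (fun y : ℝ × ℝ => u i (2 * l - y.1, y.2)) x :=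
    ContDiffAt.comp (f := fun y : ℝ × ℝ => (2 * l - y.1, y.2)) x (hu.2.1 i _ (refl_ne hx2))
      (by fun_prop)
  have e : lap (Wf u l i) x = lap (u i) (2 * l - x.1, x.2) + (-1) * lap (u i) x := by
    rw [← lap_refl, ← lap_const_mul, ← lap_add c1 (contDiffAt_const.mul (hu.2.1 i x h0))]
    rfl
  have e1 := hu.2.2.1 i _ (refl_ne hx2)
  have e2 := hu.2.2.1 i x h0
  rw [e]
  simp only [mul_sub, Finset.sum_sub_distrib, ← mul_assoc]
  linarith

lemma nrm_refl_lt {l : ℝ} (hl : l < 0) {x : ℝ × ℝ} (hx : x.1 < l) :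
    nrm (2 * l - x.1, x.2) < nrm x := by
  refine Real.sqrt_lt_sqrt (by positivity) ?_
  simp only
  nlinarith

lemma term_ge {l : ℝ} (hl : l < 0) {x : ℝ × ℝ}
    (hx : x.1 < l) (hx2 : x ≠ (2 * l, 0)) (j : Fin n) (hβ : β j ≤ 0) :
    nrm x ^ β j * Real.exp (u j x) * Wf u l j x ≤
     nrm (2 * l - x.1, x.2) ^ β j * Real.exp (u j (2 * l - x.1, x.2)) -
        nrm x ^ β j * Real.exp (u j x) := by
  have h1 : nrm x ^ β j ≤ nrm (2 * l - x.1, x.2) ^ β j :=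
    Real.rpow_le_rpow_of_nonpos (nrm_pos (refl_ne hx2)) (nrm_refl_lt hl hx).le hβ
  have h2 : Real.exp (u j x) * Wf u l j x ≤
      Real.exp (u j (2 * l - x.1, x.2)) - Real.exp (u j x) := by
    unfold Wf
    have a : Real.exp (u j (2 * l - x.1, x.2)) =
        Real.exp (u j x) * Real.exp (u j (2 * l - x.1, x.2) - u j x) := by
      rw [← Real.exp_add]; congr 1; ring
    rw [a]
    have := Real.add_one_le_exp (u j (2 * l - x.1, x.2) - u j x)
    nlinarith [Real.exp_pos (u j x)]
  have h3 := Real.rpow_nonneg (nrm_nonneg x) (β j)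
  have h4 := mul_le_mul_of_nonneg_left h2 h3
  have h5 := mul_le_mul_of_nonneg_right h1 (Real.exp_pos (u j (2 * l - x.1, x.2))).le
  linarith

lemma lap_Wf_le (hA : ∀ i j, 0 ≤ A i j) (hβ : ∀ i, β i ≤ 0) (hu : PDESolution A β u) {l : ℝ}
    (hl : l < 0) (i : Fin n) {x : ℝ × ℝ}
    (hx : x.1 < l) (hx2 : x ≠ (2 * l, 0)) : lap (Wf u l i) x ≤
      -∑ j, A i j * nrm x ^ β j * Real.exp (u j x) * Wf u l j x := by
  rw [lap_Wf hu hl i hx hx2, neg_le_neg_iff]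
  refine Finset.sum_le_sum fun j _ => ?_
  have := mul_le_mul_of_nonneg_left (term_ge (u := u) hl hx hx2 j (hβ j)) (hA i j)
  linarith

lemma Wf_bdry (l : ℝ) (i : Fin n) {x : ℝ × ℝ} (hx : x.1 = l) : Wf u l i x = 0 := by
  unfold Wf
  have : ((2 * l - x.1, x.2) : ℝ × ℝ) = x := by ext <;> simp; linarith
  rw [this]; ring

lemma maxp (hA : ∀ i j, 0 ≤ A i j) (hβ : ∀ i, β i ≤ 0) (hu : PDESolution A β u) {l : ℝ}
    (hl : l < 0) {K : Set (ℝ × ℝ)} (hK : IsClosed K) (hWK : ∀ i, ∀ x ∈ K, 0 ≤ Wf u l i x)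
    {g : ℝ × ℝ → ℝ} (hg0 : ∀ x, x.1 ≤ l → 0 < g x) (hg : ∀ x, x.1 ≤ l → ContDiffAt ℝ 2 g x)
    (hgl : ∀ i x, x.1 < l → x ∉ K → lap g x + cf A β u i x * g x < 0)
    (hinf : ∀ η > 0, ∃ R, ∀ i x, x.1 ≤ l → R ≤ nrm x → -(η * g x) ≤ Wf u l i x) :
    ∀ i x, x.1 ≤ l → 0 ≤ Wf u l i x := by
  by_contra hcon
  push Not at hcon
  obtain ⟨i0, x0, hx0, hW0⟩ := hcon
  set η := -Wf u l i0 x0 / g x0 / 2 with hη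
  have hg00 := hg0 x0 hx0
  have hηpos : 0 < η := by
    have : 0 < -Wf u l i0 x0 := by linarith
    positivity
  obtain ⟨R, hR⟩ := hinf η hηpos
  set S : Set (ℝ × ℝ) := {x | x.1 ≤ l} ∩ {x | nrm x ≤ R} with hS
  have hSc : IsCompact S :=
    (isCompact_nrm_le' R).inter_left (isClosed_le continuous_fst continuous_const)
  have hW0' : Wf u l i0 x0 = -(2 * η) * g x0 := by rw [hη]; field_simp
  have hx0S : x0 ∈ S := by
    refine ⟨hx0, ?_⟩
    by_contra h
    simp only [mem_ofPred_eq, not_le] at h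
    have := hR i0 x0 hx0 h.le
    nlinarith [mul_pos hηpos hg00]
  have hmin : ∀ i, ∃ x ∈ S, ∀ y ∈ S, Wf u l i x / g x ≤ Wf u l i y / g y := by
    intro i
    obtain ⟨x, hx, h⟩ := hSc.exists_isMinOn ⟨x0, hx0S⟩
      (f := fun x => Wf u l i x / g x) (fun x hx => by
        refine ContinuousAt.continuousWithinAt (ContinuousAt.div ?_ ?_ ?_)
        · exact (continuous_Wf hu.1 l i).continuousAt
        · exact (hg x hx.1).continuousAt
        · exact (hg0 x hx.1).ne')
    exact ⟨x, hx, fun y hy => h hy⟩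
  choose xm hxm hxmin using hmin
  obtain ⟨i, -, hi⟩ := Finset.exists_min_image Finset.univ
    (fun i => Wf u l i (xm i) / g (xm i)) ⟨i0, Finset.mem_univ _⟩
  set c := xm i with hc
  set m := -(Wf u l i c / g c) with hm
  have hcS : c ∈ S := hxm i
  have hcl : c.1 ≤ l := hcS.1
  have hgc := hg0 c hcl
  have hall : ∀ j y, y ∈ S → -m ≤ Wf u l j y / g y := fun j y hy => by
    rw [hm, neg_neg]
    exact (hi j (Finset.mem_univ _)).trans (hxmin j y hy)
  have hm2 : 2 * η ≤ m := by
    have := hall i0 x0 hx0S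
    rw [hW0', mul_div_assoc, div_self hg00.ne', mul_one] at this
    linarith
  have hmp : 0 < m := by linarith
  have hge : ∀ j y, y.1 ≤ l → -(m * g y) ≤ Wf u l j y := by
    intro j y hy
    have hgy := hg0 y hy
    by_cases hyR : nrm y ≤ R
    · have := hall j y ⟨hy, hyR⟩
      rw [le_div_iff₀ hgy] at this
      linarith
    · have := hR j y hy (by linarith)
      nlinarith
  have hφc : Wf u l i c + m * g c = 0 := by
    rw [hm]; field_simp; ring
  have hWc : Wf u l i c < 0 := by nlinarith
  have hclt : c.1 < l := by
    rcases hcl.lt_or_eq with h | h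
    · exact h
    · have := Wf_bdry (u := u) l i h
      linarith
  have hcK : c ∉ K := fun h => by linarith [hWK i c h]
  have evl : ∀ᶠ x : ℝ × ℝ in 𝓝 c, x.1 < l :=
    (continuous_fst.continuousAt (x := c)).eventually (gt_mem_nhds hclt)
  have evK : ∀ᶠ x : ℝ × ℝ in 𝓝 c, x ∉ K := hK.isOpen_compl.mem_nhds hcK
  have evp : ∀ᶠ x : ℝ × ℝ in 𝓝 c, x ≠ c → x ≠ (2 * l, 0) := by
    rcases eq_or_ne c (2 * l, 0) with h | h
    · rw [← h]; exact Eventually.of_forall fun x hx => hx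
    · filter_upwards [isOpen_ne.mem_nhds h] with x hx _ using hx
  have hlap : ∀ x : ℝ × ℝ, x.1 < l → x ∉ K → x ≠ (2 * l, 0) →
      lap (fun y => Wf u l i y + m * g y) x < 0 := by
    intro x h1 h2 h3
    rw [lap_add (contDiffAt_Wf hu hl i h1 h3) (contDiffAt_const.mul (hg x h1.le)), lap_const_mul]
    have a1 := lap_Wf_le hA hβ hu hl i h1 h3
    have a2 : -∑ j, A i j * nrm x ^ β j * Real.exp (u j x) * Wf u l j x ≤
        cf A β u i x * (m * g x) := by
      rw [cf, Finset.sum_mul, ← Finset.sum_neg_distrib]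
      refine Finset.sum_le_sum fun j _ => ?_
      have t : 0 ≤ A i j * nrm x ^ β j * Real.exp (u j x) := mul_nonneg (mul_nonneg (hA i j)
        (Real.rpow_nonneg (nrm_nonneg x) _)) (Real.exp_pos _).le
      have := mul_le_mul_of_nonneg_left (hge j x h1.le) t
      linarith
    have a3 := mul_neg_of_pos_of_neg hmp (hgl i x h1 h2)
    linarith
  have key := smp (φ := fun y => Wf u l i y + m * g y) (c := c)
    (by filter_upwards [evl] with x hx using
          (continuous_Wf hu.1 l i).continuousAt.add (continuousAt_const.mul (hg x hx.le).continuousAt))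
    (by filter_upwards [evl, evp] with x hx hp hne using
          (contDiffAt_Wf hu hl i hx (hp hne)).add (contDiffAt_const.mul (hg x hx.le)))
    (by filter_upwards [evl, evp, evK] with x hx hp hxK hne using (hlap x hx hxK (hp hne)).le)
    (by filter_upwards [evl] with x hx using by linarith [hge i x hx.le]) hφc
  have all := key.eventually_nhds.and (evl.and (evK.and evp))
  have : ∃ x, x ≠ c ∧ ((∀ᶠ y in 𝓝 x, Wf u l i y + m * g y = 0) ∧ x.1 < l ∧ x ∉ K ∧
      (x ≠ c → x ≠ (2 * l, 0))) := by
    have := (all.filter_mono (nhdsWithin_le_nhds (s := {c}ᶜ))).and self_mem_nhdsWithin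
    obtain ⟨x, hx, hx2⟩ := this.exists
    exact ⟨x, hx2, hx⟩
  obtain ⟨x, hne, hz, h1, h2, h3⟩ := this
  have b := hlap x h1 h2 (h3 hne)
  rw [lap_congr (G := fun _ => 0) hz, lap_const] at b
  exact lt_irrefl _ b

/-- decay of `Wf / gf` at infinity -/
lemma Wf_inf (hβ : ∀ i, -2 < β i ∧ β i ≤ 0) (hA : ∀ i j, 0 ≤ A i j) (hu : PDESolution A β u)
    {l K : ℝ} (hl : l < 0) (hK : 0 ≤ K) :
    ∀ η > 0, ∃ R, ∀ i x, x.1 ≤ l → R ≤ nrm x → -(η * gf K l x) ≤ Wf u l i x := by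
  intro η hη
  obtain ⟨C, hC, ε, hε, hε8, hb⟩ := lower hβ hA hu
  have lim : Tendsto (fun r : ℝ => r ^ (1 / 8 : ℝ)) atTop atTop := tendsto_rpow_atTop (by norm_num)
  obtain ⟨R1, hR1⟩ := eventually_atTop.1 (lim.eventually_ge_atTop (8 * C / η))
  refine ⟨max (max R1 (2 * (1 - l))) 1, fun i x hx hR => ?_⟩
  have r1 : R1 ≤ nrm x := le_trans (le_trans (le_max_left _ _) (le_max_left _ _)) hR
  have r2 : 2 * (1 - l) ≤ nrm x := le_trans (le_trans (le_max_right _ _) (le_max_left _ _)) hR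
  have r3 : 1 ≤ nrm x := le_trans (le_max_right _ _) hR
  have g1 := qf_growth hl.le hx r2
  have g2 := le_gf hK hx
  have b1 := hR1 _ r1
  have hxr : nrm (2 * l - x.1, x.2) ≤ nrm x := by
    refine Real.sqrt_le_sqrt ?_
    simp only
    nlinarith
  have e1 : nrm x ^ ε ≤ nrm x ^ (1 / 8 : ℝ) := Real.rpow_le_rpow_of_exponent_le r3 hε8
  have e2 : nrm (2 * l - x.1, x.2) ^ ε ≤ nrm x ^ ε := Real.rpow_le_rpow (nrm_nonneg _) hxr hε.le
  have e3 : 1 ≤ nrm x ^ (1 / 8 : ℝ) := Real.one_le_rpow r3 (by norm_num)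
  have e4 : nrm x ^ (1 / 4 : ℝ) = nrm x ^ (1 / 8 : ℝ) * nrm x ^ (1 / 8 : ℝ) := by
    rw [← Real.rpow_add (by linarith)]; norm_num
  have e5 : nrm x ^ (1 / 4 : ℝ) ≤ 2 * (nrm x / 2) ^ (1 / 4 : ℝ) := by
    have : nrm x = 2 * (nrm x / 2) := by ring
    conv_lhs => rw [this]
    rw [Real.mul_rpow (by norm_num) (by linarith)]
    refine mul_le_mul_of_nonneg_right ?_ (Real.rpow_nonneg (by linarith) _)
    calc (2 : ℝ) ^ (1 / 4 : ℝ) ≤ 2 ^ (1 : ℝ) :=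
          Real.rpow_le_rpow_of_exponent_le (by norm_num) (by norm_num)
      _ = 2 := Real.rpow_one 2
  have u1 := (abs_le.1 (hb i x)).2
  have u2 := (abs_le.1 (hb i (2 * l - x.1, x.2))).1
  set t := nrm x ^ (1 / 8 : ℝ) with ht
  have w1 : C * (1 + nrm x ^ ε) ≤ C * (2 * t) := mul_le_mul_of_nonneg_left (by linarith) hC
  have w2 : C * (1 + nrm (2 * l - x.1, x.2) ^ ε) ≤ C * (2 * t) :=
    mul_le_mul_of_nonneg_left (by linarith) hC
  rw [div_le_iff₀ hη] at b1
  have w3 : 8 * C * t ≤ t * η * t := by nlinarith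
  have w4 : η * (t * t) ≤ η * (2 * gf K l x) := mul_le_mul_of_nonneg_left (by linarith) hη.le
  unfold Wf
  nlinarith

end

section

variable {n : ℕ} {A : Matrix (Fin n) (Fin n) ℝ} {β : Fin n → ℝ} {u : Fin n → ℝ × ℝ → ℝ}

def Pl (u : Fin n → ℝ × ℝ → ℝ) (l : ℝ) : Prop := ∀ i x, x.1 ≤ l → 0 ≤ Wf u l i x

lemma far (hA : ∀ i j, 0 ≤ A i j) (hu : PDESolution A β u) :
    ∃ R : ℝ, 1 ≤ R ∧ ∀ i x, R ≤ nrm x → nrm x ^ 2 * cf A β u i x ≤ 1 / 256 := by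
  have hAs : 0 ≤ ∑ i, ∑ j, A i j :=
    Finset.sum_nonneg fun i _ => Finset.sum_nonneg fun j _ => hA i j
  obtain ⟨R, hR, h⟩ := decay hA hu (κ := 1 / (256 * (1 + ∑ i, ∑ j, A i j))) (by positivity)
  refine ⟨R, hR, fun i x hx => ?_⟩
  have h1 := h x hx
  have h2 : cf A β u i x ≤ (∑ i, ∑ j, A i j) * ∑ j, nrm x ^ β j * Real.exp (u j x) := by
    rw [cf, Finset.mul_sum]
    refine Finset.sum_le_sum fun j _ => ?_
    rw [mul_assoc]
    refine mul_le_mul_of_nonneg_right ?_ (mul_nonneg (Real.rpow_nonneg (nrm_nonneg x) _)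
      (Real.exp_pos _).le)
    have a1 : A i j ≤ ∑ j, A i j :=
      Finset.single_le_sum (f := fun j => A i j) (fun j _ => hA i j) (Finset.mem_univ j)
    have a2 : ∑ j, A i j ≤ ∑ i, ∑ j, A i j :=
      Finset.single_le_sum (f := fun i => ∑ j, A i j)
        (fun i _ => Finset.sum_nonneg fun j _ => hA i j) (Finset.mem_univ i)
    linarith
  have h3 := mul_le_mul_of_nonneg_left h2 (sq_nonneg (nrm x))
  have h4 := mul_le_mul_of_nonneg_left h1 hAs
  have h5 : (∑ i, ∑ j, A i j) * (1 / (256 * (1 + ∑ i, ∑ j, A i j))) ≤ 1 / 256 := by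
    rw [mul_one_div, div_le_div_iff₀ (by positivity) (by norm_num)]
    linarith
  linarith

lemma cf_bdd (hu : ∀ i, Continuous (u i)) (R : ℝ) {a : ℝ} (ha : a < 0) :
    ∃ C : ℝ, 0 ≤ C ∧ ∀ i x, x.1 ≤ a → nrm x ≤ R → cf A β u i x ≤ C := by
  have hS : IsCompact ({x : ℝ × ℝ | x.1 ≤ a} ∩ {x | nrm x ≤ R}) :=
    (isCompact_nrm_le' R).inter_left (isClosed_le continuous_fst continuous_const)
  have h : ∀ i, ∃ C, ∀ x ∈ {x : ℝ × ℝ | x.1 ≤ a} ∩ {x | nrm x ≤ R}, ‖cf A β u i x‖ ≤ C := by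
    intro i
    refine hS.exists_bound_of_continuousOn fun x hx => ContinuousAt.continuousWithinAt ?_
    have hx1 : x.1 ≤ a := hx.1
    have hp := nrm_pos (ne_of_neg (x := x) (by linarith))
    unfold cf
    refine tendsto_finsetSum _ fun j _ => ?_
    refine ((continuousAt_const.mul (continuous_nrm.continuousAt.rpow_const (Or.inl hp.ne'))).mul
      (hu j).continuousAt.rexp)
  choose C hC using h
  refine ⟨∑ i, |C i|, Finset.sum_nonneg fun i _ => abs_nonneg _, fun i x h1 h2 => ?_⟩
  have h3 := hC i x ⟨h1, h2⟩
  have h4 : |C i| ≤ ∑ i, |C i| :=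
    Finset.single_le_sum (f := fun i => |C i|) (fun i _ => abs_nonneg _) (Finset.mem_univ i)
  exact (Real.le_norm_self _).trans (h3.trans ((le_abs_self _).trans h4))

lemma start (hβ : ∀ i, -2 < β i ∧ β i ≤ 0) (hA : ∀ i j, 0 ≤ A i j) (hu : PDESolution A β u) :
    ∃ a < 0, ∀ l ≤ a, Pl u l := by
  obtain ⟨R, hR, h⟩ := far hA hu
  refine ⟨-R, by linarith, fun l hl => ?_⟩
  have hl0 : l < 0 := by linarith
  refine maxp hA (fun i => (hβ i).2) hu hl0 isClosed_empty (by simp) (g := gf 1 l)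
    (fun x hx => ?_) (fun x hx => contDiffAt_gf (by linarith)) (fun i x hx _ => ?_)
    (Wf_inf hβ hA hu hl0 (by norm_num))
  · linarith [qf_ge_one hx, le_gf (K := 1) (by norm_num) hx]
  · have b : -x.1 ≤ nrm x := Real.le_sqrt_of_sq_le (by nlinarith [sq_nonneg x.2])
    exact gf_far hl0.le hx (by linarith) (h i x (by linarith)) (cf_nonneg hA i x)

lemma dich (hβ : ∀ i, β i ≤ 0) (hA : ∀ i j, 0 ≤ A i j) (hu : PDESolution A β u) {l : ℝ}
    (hl : l < 0) (hP : Pl u l) (i : Fin n) {x0 : ℝ × ℝ} (hx0 : x0.1 < l) (h0 : Wf u l i x0 = 0) :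
    ∀ x, x.1 < l → ∀ᶠ y in 𝓝 x, Wf u l i y = 0 := by
  have hpre : IsPreconnected {x : ℝ × ℝ | x.1 < l} :=
    (convex_halfSpace_lt (f := fun x : ℝ × ℝ => x.1) (IsLinearMap.mk (by simp) (by simp)) l).isPreconnected
  have step : ∀ c : ℝ × ℝ, c.1 < l → Wf u l i c = 0 → ∀ᶠ y in 𝓝 c, Wf u l i y = 0 := by
    intro c hc hz
    have evl : ∀ᶠ x : ℝ × ℝ in 𝓝 c, x.1 < l :=
      (continuous_fst.continuousAt (x := c)).eventually (gt_mem_nhds hc)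
    have evp : ∀ᶠ x : ℝ × ℝ in 𝓝 c, x ≠ c → x ≠ (2 * l, 0) := by
      rcases eq_or_ne c (2 * l, 0) with h | h
      · rw [← h]; exact Eventually.of_forall fun x hx => hx
      · filter_upwards [isOpen_ne.mem_nhds h] with x hx _ using hx
    refine smp (Eventually.of_forall fun x => (continuous_Wf hu.1 l i).continuousAt)
      (by filter_upwards [evl, evp] with x hx hp hne using contDiffAt_Wf hu hl i hx (hp hne))
      (by
        filter_upwards [evl, evp] with x hx hp hne
        refine (lap_Wf_le hA hβ hu hl i hx (hp hne)).trans (neg_nonpos.2 ?_)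
        exact Finset.sum_nonneg fun j _ => mul_nonneg (mul_nonneg (mul_nonneg (hA i j)
          (Real.rpow_nonneg (nrm_nonneg x) _)) (Real.exp_pos _).le) (hP j x hx.le))
      (by filter_upwards [evl] with x hx using hP i x hx.le) hz
  have hsub := IsPreconnected.subset_left_of_subset_union
    (u := {x | ∀ᶠ y in 𝓝 x, Wf u l i y = 0}) (v := {x | Wf u l i x ≠ 0})
    isOpen_setOfPred_eventually_nhds (isOpen_ne_fun (continuous_Wf hu.1 l i) continuous_const)
    (by
      rw [Set.disjoint_left]
      intro x hx hx2
      exact hx2 (show ∀ᶠ y in 𝓝 x, Wf u l i y = 0 from hx).self_of_nhds)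
    (by
      intro x hx
      by_cases hz : Wf u l i x = 0
      · exact Or.inl (step x hx hz)
      · exact Or.inr hz)
    ⟨x0, hx0, step x0 hx0 h0⟩ hpre
  intro x hx
  exact hsub hx

lemma posW (hH : H1 A) (hβ : ∀ i, -2 < β i ∧ β i ≤ 0) (hβ0 : ∃ i, β i ≠ 0)
    (hu : PDESolution A β u) {l : ℝ}
    (hl : l < 0) (hP : Pl u l) (i : Fin n) {x : ℝ × ℝ} (hx : x.1 < l) : 0 < Wf u l i x := by
  obtain ⟨hsymm, hA, hirr, hdet⟩ := hH
  have hβn : ∀ i, β i ≤ 0 := fun i => (hβ i).2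
  refine lt_of_le_of_ne (hP i x hx.le) fun hz => ?_
  classical
  set S : Finset (Fin n) := Finset.univ.filter fun i => ∀ x : ℝ × ℝ, x.1 < l → Wf u l i x = 0 with hS
  have memS : ∀ i (x : ℝ × ℝ), x.1 < l → Wf u l i x = 0 → i ∈ S := fun i x hx h => by
    rw [hS, Finset.mem_filter]
    exact ⟨Finset.mem_univ _, fun y hy => (dich hβn hA hu hl hP i hx h y hy).self_of_nhds⟩
  have prop : ∀ i ∈ S, ∀ j, A i j ≠ 0 → j ∈ S ∧ β j = 0 := by
    intro i hi j hij
    have hx : ((l - 1, 1) : ℝ × ℝ).1 < l := by simp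
    have hx2 : ((l - 1, 1) : ℝ × ℝ) ≠ (2 * l, 0) := fun h => by
      have := congrArg Prod.snd h
      simp at this
    generalize ((l - 1, 1) : ℝ × ℝ) = z at hx hx2
    have hi0 := (Finset.mem_filter.1 hi).2 z hx
    have e1 : lap (Wf u l i) z = 0 := by
      rw [lap_congr (G := fun _ => 0) (dich hβn hA hu hl hP i hx hi0 z hx), lap_const]
    rw [lap_Wf hu hl i hx hx2, neg_eq_zero] at e1
    have tn : ∀ k, 0 ≤ nrm z ^ β k * Real.exp (u k z) * Wf u l k z := fun k =>
      mul_nonneg (mul_nonneg (Real.rpow_nonneg (nrm_nonneg z) _) (Real.exp_pos _).le)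
        (hP k z hx.le)
    have e2 := (Finset.sum_eq_zero_iff_of_nonneg fun k _ => mul_nonneg (hA i k)
      ((tn k).trans (term_ge (u := u) hl hx hx2 k (hβn k)))).1 e1 j (Finset.mem_univ j)
    have e3 := (mul_eq_zero.1 e2).resolve_left hij
    have e4 := term_ge (u := u) hl hx hx2 j (hβn j)
    rw [e3] at e4
    have e5 := le_antisymm e4 (tn j)
    have hzp := nrm_pos (ne_of_neg (x := z) (by linarith))
    have e6 : Wf u l j z = 0 := by
      have := mul_pos (Real.rpow_pos_of_pos hzp (β j)) (Real.exp_pos (u j z))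
      exact (mul_eq_zero.1 e5).resolve_left this.ne'
    refine ⟨memS j z hx e6, ?_⟩
    by_contra hb
    have hb' : β j < 0 := lt_of_le_of_ne (hβn j) hb
    have e7 : u j (2 * l - z.1, z.2) = u j z := by unfold Wf at e6; linarith
    rw [e7, ← sub_mul] at e3
    have e8 := (mul_eq_zero.1 e3).resolve_right (Real.exp_pos _).ne'
    have := Real.rpow_lt_rpow_of_neg (nrm_pos (refl_ne hx2)) (nrm_refl_lt hl hx) hb'
    linarith
  have hSu : S = Finset.univ := by
    by_contra hne
    obtain ⟨i', hi', j, hj, hij⟩ := hirr S ⟨i, memS i x hx hz.symm⟩ hne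
    exact (Finset.mem_compl.1 hj) (prop i' hi' j hij).1
  obtain ⟨j0, hj0⟩ := hβ0
  have : ∃ i, A i j0 ≠ 0 := by
    by_contra hcon
    push Not at hcon
    exact hdet.ne_zero (Matrix.det_eq_zero_of_column_eq_zero j0 hcon)
  obtain ⟨i', hi'⟩ := this
  exact hj0 (prop i' (by rw [hSu]; exact Finset.mem_univ _) j0 hi').2

lemma open_step (hH : H1 A) (hβ : ∀ i, -2 < β i ∧ β i ≤ 0) (hβ0 : ∃ i, β i ≠ 0)
    (hu : PDESolution A β u) {L : ℝ} (hL : L < 0) (hP : Pl u L) : ∀ᶠ l in 𝓝 L, Pl u l := by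
  have hA := hH.2.1
  obtain ⟨R, hR, hfar⟩ := far hA hu
  obtain ⟨C, hC, hcf⟩ := cf_bdd (A := A) (β := β) hu.1 R (a := L / 2) (by linarith)
  set T := 4 * C * (R + 1) * Real.exp 1 with hT
  have hT0 : 0 ≤ T := by positivity
  set K := 1 + T with hK
  have hK0 : 0 < K := by linarith
  have hKT : T < K ^ 2 := by nlinarith
  have hQ : IsCompact ({x : ℝ × ℝ | x.1 ≤ L - 1 / (2 * K)} ∩ {x | nrm x ≤ R}) :=
    (isCompact_nrm_le' R).inter_left (isClosed_le continuous_fst continuous_const)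
  have hK2 : 0 < 1 / (2 * K) := by positivity
  have ev : ∀ᶠ l in 𝓝 L, ∀ x ∈ ({x : ℝ × ℝ | x.1 ≤ L - 1 / (2 * K)} ∩ {x | nrm x ≤ R}),
      ∀ i, 0 < Wf u l i x := by
    refine hQ.eventually_forall_of_forall_eventually fun x hx => ?_
    rw [eventually_all]
    intro i
    have hx1 : x.1 ≤ L - 1 / (2 * K) := hx.1
    exact (continuous_Wf2 hu.1 i).continuousAt.eventually
      (lt_mem_nhds (posW hH hβ hβ0 hu hL hP i (x := x) (by linarith)))
  have hKK : 1 / K = 1 / (2 * K) + 1 / (2 * K) := by field_simp; norm_num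
  filter_upwards [ev, gt_mem_nhds (show L < L / 2 by linarith),
    gt_mem_nhds (show L < L + 1 / (2 * K) by linarith)] with l h1 h2 h3
  have hl0 : l < 0 := by linarith
  refine maxp hA (fun i => (hβ i).2) hu hl0 (K := {x : ℝ × ℝ | x.1 ≤ l - 1 / K} ∩ {x | nrm x ≤ R})
    ((isClosed_le continuous_fst continuous_const).inter
      (isClosed_le continuous_nrm continuous_const)) (fun i x hx => ?_) (g := gf K l)
    (fun x hx => ?_) (fun x hx => contDiffAt_gf (by linarith)) (fun i x hx hxK => ?_)
    (Wf_inf hβ hA hu hl0 hK0.le)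
  · have a : x.1 ≤ l - 1 / K := hx.1
    exact (h1 x ⟨show x.1 ≤ _ by linarith, hx.2⟩ i).le
  · linarith [qf_ge_one hx, le_gf hK0.le hx]
  · by_cases hn : nrm x ≤ R
    · have : l - 1 / K < x.1 := by
        by_contra hcon
        exact hxK ⟨not_lt.1 hcon, hn⟩
      exact gf_strip hl0.le hx hK0 this hn (hcf i x (by linarith) hn) (cf_nonneg hA i x) hKT
    · exact gf_far hl0.le hx (by linarith) (hfar i x (by linarith)) (cf_nonneg hA i x)

lemma Pl_iff (l : ℝ) : Pl u l ↔ ∀ i (p : ℝ × ℝ), 0 ≤ Wf u l i (l - |p.1|, p.2) := by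
  constructor
  · intro h i p
    exact h i _ (by simp)
  · intro h i x hx
    have := h i (l - x.1, x.2)
    simp only [abs_of_nonneg (sub_nonneg.2 hx), sub_sub_cancel] at this
    exact this

lemma isClosed_Pl (hu : ∀ i, Continuous (u i)) : IsClosed {l | Pl u l} := by
  have : {l | Pl u l} = ⋂ i, ⋂ p : ℝ × ℝ, {l | 0 ≤ Wf u l i (l - |p.1|, p.2)} := by
    ext l
    simp only [mem_ofPred_eq, mem_iInter]
    exact Pl_iff l
  rw [this]
  refine isClosed_iInter fun i => isClosed_iInter fun p => isClosed_le continuous_const ?_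
  have := hu i
  unfold Wf
  fun_prop

lemma Pl_zero (hH : H1 A) (hβ : ∀ i, -2 < β i ∧ β i ≤ 0) (hβ0 : ∃ i, β i ≠ 0)
    (hu : PDESolution A β u) : Pl u 0 := by
  obtain ⟨a, ha, hst⟩ := start hβ hH.2.1 hu
  have neg : ∀ b < 0, Pl u b := by
    intro b hb
    have := IsClosed.Icc_subset_of_forall_mem_nhdsWithin (a := min a b) (b := b)
      (s := {l | Pl u l}) ((isClosed_Pl hu.1).inter isClosed_Icc) (hst _ (min_le_left _ _))
      (fun x hx => mem_nhdsWithin_of_mem_nhds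
        (open_step hH hβ hβ0 hu (lt_trans hx.2.2 hb) hx.1))
    exact this ⟨min_le_right _ _, le_rfl⟩
  have hcl : (0 : ℝ) ∈ closure (Iio (0 : ℝ)) := by rw [closure_Iio]; simp
  exact closure_minimal (fun b hb => neg b hb) (isClosed_Pl hu.1) hcl

end

section

variable {n : ℕ} {A : Matrix (Fin n) (Fin n) ℝ} {β : Fin n → ℝ} {u : Fin n → ℝ × ℝ → ℝ}

lemma rot_mp {a b : ℝ} (hab : a ^ 2 + b ^ 2 = 1) : MeasurePreserving (rot a b) volume volume := by
  have hL : ∀ x, Matrix.toLin (Module.Basis.finTwoProd ℝ) (Module.Basis.finTwoProd ℝ) !![a, -b; b, a] x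
      = rot a b x := fun x => by
    rw [Matrix.toLin_finTwoProd_apply, rot]
    ext
    · simp; ring
    · simp
  have hdet : LinearMap.det (Matrix.toLin (Module.Basis.finTwoProd ℝ) (Module.Basis.finTwoProd ℝ)
      !![a, -b; b, a]) = 1 := by
    rw [LinearMap.det_toLin, Matrix.det_fin_two_of]
    linarith
  have hm := Measure.map_linearMap_addHaar_eq_smul_addHaar (volume : Measure (ℝ × ℝ))
    (f := Matrix.toLin (Module.Basis.finTwoProd ℝ) (Module.Basis.finTwoProd ℝ) !![a, -b; b, a])
    (by rw [hdet]; norm_num)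
  rw [hdet] at hm
  simp only [inv_one, abs_one, ENNReal.ofReal_one, one_smul] at hm
  refine ⟨by unfold rot; fun_prop, ?_⟩
  rw [show rot a b = _ from (funext fun x => (hL x).symm)]
  exact hm

lemma nrm_rot {a b : ℝ} (hab : a ^ 2 + b ^ 2 = 1) (x : ℝ × ℝ) : nrm (rot a b x) = nrm x := by
  unfold nrm rot
  congr 1
  simp only
  linear_combination (x.1 ^ 2 + x.2 ^ 2) * hab

lemma sol_rot {a b : ℝ} (hab : a ^ 2 + b ^ 2 = 1) (hu : PDESolution A β u) :
    PDESolution A β fun i x => u i (rot a b x) := by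
  obtain ⟨hc, hC, he, hi⟩ := hu
  have rc : ContDiff ℝ 2 (rot a b) := by unfold rot; fun_prop
  have rne : ∀ x, x ≠ 0 → rot a b x ≠ 0 := fun x hx h => by
    have := nrm_rot hab x
    rw [h, nrm_zero] at this
    exact hx (nrm_eq_zero.1 this.symm)
  refine ⟨fun i => (hc i).comp rc.continuous, fun i x hx => ?_, fun i x hx => ?_, fun i => ?_⟩
  · exact ContDiffAt.comp x (hC i _ (rne x hx)) rc.contDiffAt
  · rw [lap_rot hab (hC i _ (rne x hx)), ← he i _ (rne x hx), nrm_rot hab]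
  · have := (rot_mp hab).integrable_comp_of_integrable (hi i)
    refine this.congr (Eventually.of_forall fun x => ?_)
    simp only [Function.comp, nrm_rot hab]

lemma sym (hH : H1 A) (hβ : ∀ i, -2 < β i ∧ β i ≤ 0) (hβ0 : ∃ i, β i ≠ 0)
    (hu : PDESolution A β u) (i : Fin n) (s t : ℝ) : u i (-s, t) = u i (s, t) := by
  have key : ∀ s t : ℝ, 0 ≤ s → u i (-s, t) = u i (s, t) := by
    intro s t hs
    have h1 := Pl_zero hH hβ hβ0 hu i (-s, t) (by simpa using hs)
    have h2 := Pl_zero hH hβ hβ0 (sol_rot (a := -1) (b := 0) (by norm_num) hu) i (-s, -t)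
      (by simpa using hs)
    simp only [Wf, rot] at h1 h2
    norm_num at h1 h2
    exact le_antisymm h1 h2
  rcases le_total 0 s with h | h
  · exact key s t h
  · have := key (-s) t (by linarith)
    rw [neg_neg] at this
    exact this.symm

lemma main_radial (hH : H1 A) (hβ : ∀ i, -2 < β i ∧ β i ≤ 0) (hβ0 : ∃ i, β i ≠ 0)
    (hu : PDESolution A β u) (i : Fin n) (x y : ℝ × ℝ) (hxy : nrm x = nrm y) : u i x = u i y := by
  rcases eq_or_ne x y with rfl | hne
  · rfl
  have hd := nrm_pos (sub_ne_zero.2 hne)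
  have hds := nrm_sq (x - y)
  set d := nrm (x - y) with hd'
  simp only [Prod.fst_sub, Prod.snd_sub] at hds
  set a := (x.1 - y.1) / d with ha
  set b := (x.2 - y.2) / d with hb
  have hab : a ^ 2 + b ^ 2 = 1 := by
    rw [ha, hb, div_pow, div_pow, ← add_div, ← hds, div_self (by positivity)]
  have had : a * d = x.1 - y.1 := by rw [ha]; field_simp
  have hbd : b * d = x.2 - y.2 := by rw [hb]; field_simp
  have hsq : x.1 ^ 2 + x.2 ^ 2 = y.1 ^ 2 + y.2 ^ 2 := by rw [← nrm_sq, ← nrm_sq, hxy]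
  have inv : ∀ z : ℝ × ℝ, rot a b (a * z.1 + b * z.2, -b * z.1 + a * z.2) = z := fun z => by
    unfold rot
    ext
    · simp only; linear_combination z.1 * hab
    · simp only; linear_combination z.2 * hab
  have e1 : a * y.1 + b * y.2 = -(a * x.1 + b * x.2) := by
    have : d * (a * y.1 + b * y.2 + (a * x.1 + b * x.2)) = 0 := by
      linear_combination (y.1 + x.1) * had + (y.2 + x.2) * hbd + hsq
    have := (mul_eq_zero.1 this).resolve_left hd.ne'
    linarith
  have e2 : -b * y.1 + a * y.2 = -b * x.1 + a * x.2 := by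
    have : d * ((-b * y.1 + a * y.2) - (-b * x.1 + a * x.2)) = 0 := by
      linear_combination (x.1 - y.1) * hbd - (x.2 - y.2) * had
    have := (mul_eq_zero.1 this).resolve_left hd.ne'
    linarith
  have h := sym hH hβ hβ0 (sol_rot hab hu) i (a * x.1 + b * x.2) (-b * x.1 + a * x.2)
  rw [inv x, ← e1, ← e2, inv y] at h
  exact h.symm

end

end Proof

theorem all_solutions_radial_of_nonpositive_beta {n : ℕ} (hn : 0 < n)
    (A : Matrix (Fin n) (Fin n) ℝ) (β : Fin n → ℝ)
    (hA : H1 A) (hβ : ∀ i, -2 < β i ∧ β i ≤ 0) (hβ0 : ∃ i, β i ≠ 0)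
    (u : Fin n → ℝ × ℝ → ℝ) (hu : PDESolution A β u) :
    ∀ i, ∀ x y : ℝ × ℝ, nrm x = nrm y → u i x = u i y := by
  exact fun i x y h => main_radial hA hβ hβ0 hu i x y h
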